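/- arXiv:1604.01256 — 2 statements merged into one kernel-verified Lean document; each statement's English description precedes it below -/
import Mathlib

section
/- Let E be an elliptic curve over a finite field F_q and let α be a root in C of the characteristic polynomial T² − t·T + q of the Frobenius endomorphism, where t = q + 1 − #E(F_q). Then α/√q is a root of unity if and only if E is supersingular (i.e., p | t, where p = char(F_q)). -/
namespace SupersingularFrobenius

open WeierstrassCurve WeierstrassCurve.Affine Polynomial

theorem exists_addSubMap_sym2x_eq {K : Type*} [Field K] [DecidableEq K] (W : WeierstrassCurve.Affine K)
    (P Q : W.Point) :
    ∃ c : K, ∀ i, (addSubMap W i).eval (P.sym2x Q) = c * (P + Q).sym2x (P - Q) i := by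
  rcases P with _ | ⟨x₁, y₁, h₁⟩
  · rcases Q with _ | ⟨x₂, y₂, h₂⟩
    · refine ⟨1, fun i ↦ ?_⟩
      rw [← Point.zero_def, add_zero, sub_zero, Point.sym2x_zero_zero]
      fin_cases i <;> simp [addSubMap]
    · refine ⟨1, fun i ↦ ?_⟩
      rw [← Point.zero_def, zero_add, zero_sub, Point.sym2x_neg_right, Point.sym2x_zero_some,
        Point.sym2x_some_some]
      fin_cases i <;> simp [addSubMap] <;> ring
  rcases Q with _ | ⟨x₂, y₂, h₂⟩
  · refine ⟨1, fun i ↦ ?_⟩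
    rw [← Point.zero_def, add_zero, sub_zero, Point.sym2x_some_zero, Point.sym2x_some_some]
    fin_cases i <;> simp [addSubMap] <;> ring
  have e₁ := (W.equation_iff _ _).1 h₁.1
  have e₂ := (W.equation_iff _ _).1 h₂.1
  have double (h : W.Nonsingular x₁ y₁) : ∃ c : K, ∀ i,
      (addSubMap W i).eval ((Point.some x₁ y₁ h).sym2x (Point.some x₁ y₁ h)) =
        c * (Point.some x₁ y₁ h + Point.some x₁ y₁ h).sym2x 0 i := by
    by_cases hy : y₁ = W.negY x₁ y₁
    · rw [Point.add_self_of_Y_eq hy, Point.sym2x_zero_zero, Point.sym2x_some_some]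
      have hy' : 2 * y₁ + W.a₁ * x₁ + W.a₃ = 0 := by
        rw [negY] at hy; linear_combination hy
      refine ⟨(addSubMap W 0).eval ![x₁ * x₁, x₁ + x₁, 1], fun i ↦ ?_⟩
      fin_cases i
      · simp
      · simp [addSubMap, b₂, b₄, b₆]
        linear_combination (2 * y₁ + W.a₁ * x₁ + W.a₃) * hy' - 4 * e₁
      · simp [addSubMap]; ring
    · rw [Point.add_self_of_Y_ne hy, Point.sym2x_some_zero, Point.sym2x_some_some]
      have hy' : 2 * y₁ + W.a₁ * x₁ + W.a₃ ≠ 0 := by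
        intro h0; apply hy; rw [negY]; linear_combination h0
      refine ⟨(2 * y₁ + W.a₁ * x₁ + W.a₃) ^ 2, fun i ↦ ?_⟩
      have hd : y₁ - W.negY x₁ y₁ = 2 * y₁ + W.a₁ * x₁ + W.a₃ := by rw [negY]; ring
      fin_cases i
      · have hX : (2 * y₁ + W.a₁ * x₁ + W.a₃) ^ 2 * W.addX x₁ x₁ (W.slope x₁ x₁ y₁ y₁) =
            x₁ ^ 4 - W.b₄ * x₁ ^ 2 - 2 * W.b₆ * x₁ - W.b₈ := by
          rw [addX, slope_of_Y_ne rfl hy, hd]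
          field_simp
          simp only [b₄, b₆, b₈]
          linear_combination (-W.a₁ ^ 2 - 4 * (W.a₂ + 2 * x₁)) * e₁
        rw [addX] at hX
        simp [addSubMap]
        linear_combination -hX
      · simp [addSubMap, b₂, b₄, b₆]
        linear_combination - 4 * e₁
      · simp [addSubMap]; ring
  by_cases hx : x₁ = x₂
  · rcases Point.X_eq_iff (h₁ := h₁) (h₂ := h₂) |>.1 hx with h | h
    · rw [← h, sub_self]
      exact double h₁
    · have h' : Point.some x₂ y₂ h₂ = - Point.some x₁ y₁ h₁ := by rw [h, neg_neg]
      rw [h', Point.sym2x_neg_right, add_neg_cancel, sub_neg_eq_add, Point.sym2x_comm 0]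
      exact double h₁
  · have hx' : x₁ - x₂ ≠ 0 := sub_ne_zero.2 hx
    rw [sub_eq_add_neg, Point.neg_some, Point.add_of_X_ne hx, Point.add_of_X_ne hx,
      Point.sym2x_some_some, Point.sym2x_some_some]
    refine ⟨(x₁ - x₂) ^ 2, fun i ↦ ?_⟩
    fin_cases i
    · simp [addSubMap, addX, slope_of_X_ne hx, negY]
      field_simp
      simp only [b₄, b₆, b₈]
      linear_combination (-(((y₁ - y₂) * (y₁ + y₂ + W.a₁ * x₂ + W.a₃) + (x₁ - x₂) *
        (x₁ ^ 2 + x₁ * x₂ + x₂ ^ 2 + W.a₂ * (x₁ + x₂) + W.a₄ - W.a₁ * y₁)) + W.a₁ * (x₁ - x₂) *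
        (2 * y₁ + W.a₁ * x₂ + W.a₃) + W.a₁ ^ 2 * (x₁ - x₂) ^ 2)) * (e₁ - e₂) -
        (x₁ - x₂) ^ 2 * ((-W.a₁ ^ 2 - 2 * (W.a₂ + x₁ + x₂)) * e₁ - 2 * (W.a₂ + x₁ + x₂) * e₂)
    · simp [addSubMap, addX, slope_of_X_ne hx, negY]
      field_simp
      simp only [b₂, b₄, b₆]
      linear_combination -2 * e₁ - 2 * e₂
    · simp [addSubMap]; ring

theorem exists_isUnit_of_mul_eq_mul {R ι : Type*} [CommRing R] [IsDomain R] {v w : ι → R}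
    (hv : Ideal.span (Set.range v) = ⊤) (hw : Ideal.span (Set.range w) = ⊤)
    (h : ∀ i j, v i * w j = v j * w i) : ∃ e : R, IsUnit e ∧ ∀ i, v i = e * w i := by
  have key : ∀ {v w : ι → R}, Ideal.span (Set.range w) = ⊤ → (∀ i j, v i * w j = v j * w i) →
      ∃ e : R, ∀ i, v i = e * w i := by
    intro v w hw h
    have h1 : (1 : R) ∈ Ideal.span (Set.range w) := hw ▸ Submodule.mem_top
    obtain ⟨c, hc⟩ := (Finsupp.mem_ideal_span_range_iff_exists_finsupp).1 h1
    refine ⟨c.sum fun i a ↦ a * v i, fun i ↦ ?_⟩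
    calc v i = v i * c.sum (fun i a ↦ a * w i) := by rw [hc, mul_one]
      _ = _ := by
        simp only [Finsupp.sum, Finset.mul_sum, Finset.sum_mul]
        exact Finset.sum_congr rfl fun j _ ↦ by linear_combination c j * h i j
  obtain ⟨e, he⟩ := key hw h
  obtain ⟨f, hf⟩ := key (v := w) (w := v) hv fun i j ↦ by linear_combination h j i
  have : ∃ i, v i ≠ 0 := by
    by_contra! h0
    have : Ideal.span (Set.range v) ≤ ⊥ := Ideal.span_le.2 (by rintro _ ⟨i, rfl⟩; simp [h0 i])
    exact top_ne_bot (hv ▸ le_bot_iff.1 this)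
  obtain ⟨i, hi⟩ := this
  refine ⟨e, .of_mul_eq_one f (mul_right_cancel₀ hi ?_), he⟩
  rw [one_mul, mul_assoc, ← hf, ← he]

theorem span_range_sym2_eq_top {R : Type*} [CommRing R] {a b c d : R} (h : IsCoprime a b)
    (h' : IsCoprime c d) : Ideal.span (Set.range ![a * c, a * d + b * c, b * d]) = ⊤ := by
  by_contra hI
  obtain ⟨M, hM, hle⟩ := Ideal.exists_le_maximal _ hI
  have hmem (i) : ![a * c, a * d + b * c, b * d] i ∈ M :=
    hle (Ideal.subset_span (Set.mem_range_self i))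
  have h0 : a * c ∈ M := hmem 0
  have h1 : a * d + b * c ∈ M := hmem 1
  have h2 : b * d ∈ M := hmem 2
  have hab : a ∈ M → b ∈ M → False := fun ha hb ↦ by
    obtain ⟨r, s, hrs⟩ := h
    exact M.one_notMem (hrs ▸ M.add_mem (M.mul_mem_left _ ha) (M.mul_mem_left _ hb))
  have hcd : c ∈ M → d ∈ M → False := fun ha hb ↦ by
    obtain ⟨r, s, hrs⟩ := h'
    exact M.one_notMem (hrs ▸ M.add_mem (M.mul_mem_left _ ha) (M.mul_mem_left _ hb))
  have := hM.isPrime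
  rcases this.mem_or_mem h0 with ha | hc
  · rcases this.mem_or_mem h2 with hb | hd
    · exact hab ha hb
    · have : b * c ∈ M := by simpa using M.sub_mem h1 (M.mul_mem_right d ha)
      rcases hM.isPrime.mem_or_mem this with hb | hc
      · exact hab ha hb
      · exact hcd hc hd
  · rcases this.mem_or_mem h2 with hb | hd
    · have : a * d ∈ M := by simpa using M.sub_mem h1 (M.mul_mem_left b hc)
      rcases hM.isPrime.mem_or_mem this with ha | hd
      · exact hab ha hb
      · exact hcd hc hd
    · exact hcd hc hd

theorem span_range_addSubMap_eq_top {R : Type*} [CommRing R] (W : WeierstrassCurve R)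
    [W.IsElliptic] {v : Fin 3 → R} (hv : Ideal.span (Set.range v) = ⊤) :
    Ideal.span (Set.range fun i ↦ (addSubMap W i).eval v) = ⊤ := by
  rw [← top_le_iff, ← Ideal.span_pow_eq_top _ hv 4, Ideal.span_le]
  rintro _ ⟨_, ⟨i, rfl⟩, rfl⟩
  simp only [SetLike.mem_coe]
  rw [← addSubMapCoeff_condition W v i]
  exact Ideal.sum_mem _ fun j _ ↦ Ideal.mul_mem_left _ _ (Ideal.subset_span ⟨j, rfl⟩)

theorem map_eval_addSubMap {R S : Type*} [CommRing R] [CommRing S] (f : R →+* S)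
    (W : WeierstrassCurve R) (v : Fin 3 → R) (i : Fin 3) :
    f ((addSubMap W i).eval v) = (addSubMap (W.map f) i).eval (f ∘ v) := by
  fin_cases i <;> simp [addSubMap, map_ofNat]

theorem eval_addSubMap_smul {R : Type*} [CommRing R] (W : WeierstrassCurve R) (k : R)
    (v : Fin 3 → R) (i : Fin 3) :
    (addSubMap W i).eval (k • v) = k ^ 2 * (addSubMap W i).eval v := by
  fin_cases i <;> simp [addSubMap] <;> ring

section Rep

set_option linter.unusedSectionVars false

variable {F K : Type*} [Field F] [Field K] [Algebra F K] [Algebra F[X] K] [IsScalarTower F F[X] K]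
  [FaithfulSMul F[X] K] {W : WeierstrassCurve F}

/-- The coprime polynomials `a`, `b` represent the `x`-coordinate `a / b` of `P`. -/
structure IsRep (P : (W.baseChange K).toAffine.Point) (a b : F[X]) : Prop where
  isCoprime : IsCoprime a b
  eq : algebraMap F[X] K a * P.xRep 1 = algebraMap F[X] K b * P.xRep 0

theorem IsRep.exists_scale {P : (W.baseChange K).toAffine.Point} {a b : F[X]}
    (h : IsRep P a b) :
    ∃ k : K, algebraMap F[X] K a = k * P.xRep 0 ∧ algebraMap F[X] K b = k * P.xRep 1 := by
  have := h.eq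
  rcases P with _ | ⟨x, y, hP⟩
  · have hb : 0 = algebraMap F[X] K b := by simpa [← Point.zero_def] using this
    exact ⟨algebraMap F[X] K a, by simp [← Point.zero_def, ← hb]⟩
  · exact ⟨algebraMap F[X] K b, by simp_all⟩

theorem isRep_zero_iff {a b : F[X]} :
    IsRep (0 : (W.baseChange K).toAffine.Point) a b ↔ IsUnit a ∧ b = 0 := by
  constructor
  · rintro ⟨h, h'⟩
    have : b = 0 := FaithfulSMul.algebraMap_injective F[X] K
      ((show 0 = algebraMap F[X] K b by simpa using h').symm.trans (map_zero _).symm)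
    subst this
    exact ⟨isCoprime_zero_right.1 h, rfl⟩
  · rintro ⟨h, rfl⟩
    exact ⟨isCoprime_zero_right.2 h, by simp⟩

theorem isRep_some_iff {x y : K} {hP : (W.baseChange K).toAffine.Nonsingular x y} {a b : F[X]} :
    IsRep (Point.some x y hP) a b ↔
      IsCoprime a b ∧ algebraMap F[X] K a = algebraMap F[X] K b * x :=
  ⟨fun h ↦ ⟨h.1, by simpa using h.2⟩, fun h ↦ ⟨h.1, by simpa using h.2⟩⟩

theorem IsRep.exists_unit {P : (W.baseChange K).toAffine.Point} {a b a' b' : F[X]}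
    (h : IsRep P a b) (h' : IsRep P a' b') : ∃ e : F, e ≠ 0 ∧ a = C e * a' ∧ b = C e * b' := by
  have hs {a b : F[X]} (h : IsCoprime a b) : Ideal.span (Set.range ![a, b]) = ⊤ := by
    rw [Matrix.range_cons, Matrix.range_cons, Matrix.range_empty, Set.union_empty,
      Set.singleton_union]
    exact Ideal.isCoprime_span_singleton_iff _ _ |>.2 h |> fun h ↦ by
      rw [Ideal.span_insert]; exact Ideal.isCoprime_iff_sup_eq.1 h
  have hx : a * b' = b * a' := by
    apply FaithfulSMul.algebraMap_injective F[X] K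
    obtain ⟨k, hk, hk'⟩ := h.exists_scale
    obtain ⟨l, hl, hl'⟩ := h'.exists_scale
    rw [map_mul, map_mul, hk, hk', hl, hl']
    ring
  obtain ⟨e, he, H⟩ := exists_isUnit_of_mul_eq_mul (hs h.1) (hs h'.1) fun i j ↦ by
    fin_cases i <;> fin_cases j <;> simp [hx]
  obtain ⟨e, he', rfl⟩ := Polynomial.isUnit_iff.1 he
  exact ⟨e, he'.ne_zero, H 0, H 1⟩

theorem IsRep.addSub [DecidableEq K] [W.IsElliptic] {P Q : (W.baseChange K).toAffine.Point}
    {a b c d a₁ b₁ a₂ b₂ : F[X]}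
    (hP : IsRep P a b) (hQ : IsRep Q c d) (h₁ : IsRep (P + Q) a₁ b₁) (h₂ : IsRep (P - Q) a₂ b₂) :
    ∃ e : F, e ≠ 0 ∧ ∀ i, (addSubMap (W.map C) i).eval ![a * c, a * d + b * c, b * d] =
      C e * ![a₁ * a₂, a₁ * b₂ + b₁ * a₂, b₁ * b₂] i := by
  have hv := span_range_sym2_eq_top hP.1 hQ.1
  have hw := span_range_sym2_eq_top h₁.1 h₂.1
  set v := ![a * c, a * d + b * c, b * d] with hvdef
  set w := ![a₁ * a₂, a₁ * b₂ + b₁ * a₂, b₁ * b₂] with hwdef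
  obtain ⟨k, hk⟩ : ∃ k : K, algebraMap F[X] K ∘ v = k • P.sym2x Q := by
    obtain ⟨k, hk, hk'⟩ := hP.exists_scale
    obtain ⟨l, hl, hl'⟩ := hQ.exists_scale
    refine ⟨k * l, funext fun i ↦ ?_⟩
    fin_cases i <;> simp [hvdef, hk, hk', hl, hl', Point.sym2x] <;> ring
  obtain ⟨l, hl⟩ : ∃ k : K, algebraMap F[X] K ∘ w = k • (P + Q).sym2x (P - Q) := by
    obtain ⟨k, hk, hk'⟩ := h₁.exists_scale
    obtain ⟨l, hl, hl'⟩ := h₂.exists_scale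
    refine ⟨k * l, funext fun i ↦ ?_⟩
    fin_cases i <;> simp [hwdef, hk, hk', hl, hl', Point.sym2x] <;> ring
  obtain ⟨m, hm⟩ := exists_addSubMap_sym2x_eq (W.baseChange K).toAffine P Q
  have hmap : (W.map C).map (algebraMap F[X] K) = W.baseChange K := by
    rw [WeierstrassCurve.map_map]
    congr 1
    ext x
    exact (IsScalarTower.algebraMap_apply F F[X] K x).symm
  have key (i) : algebraMap F[X] K ((addSubMap (W.map C) i).eval v) =
      k ^ 2 * (m * (P + Q).sym2x (P - Q) i) := by
    rw [map_eval_addSubMap, hmap, hk, eval_addSubMap_smul, ← hm]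
  have key' (i) : algebraMap F[X] K (w i) = l * (P + Q).sym2x (P - Q) i := congr_fun hl i
  obtain ⟨e, he, H⟩ := exists_isUnit_of_mul_eq_mul (span_range_addSubMap_eq_top (W.map C) hv) hw
    fun i j ↦ by
      apply FaithfulSMul.algebraMap_injective F[X] K
      rw [map_mul, map_mul, key, key, key', key']
      ring
  obtain ⟨e, he', rfl⟩ := Polynomial.isUnit_iff.1 he
  exact ⟨e, he'.ne_zero, H⟩

end Rep

section Degree

variable {F : Type*} [Field F]

theorem degree_mul_lt_left {f g a b : F[X]} (hf : f.degree < a.degree) (hg : g.degree ≤ b.degree)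
    (hb : b ≠ 0) : (f * g).degree < (a * b).degree := by
  rw [degree_mul, degree_mul]
  exact (add_le_add_right hg _).trans_lt (WithBot.add_lt_add_right (degree_ne_bot.2 hb) hf)

theorem degree_mul_lt_right {f g a b : F[X]} (hf : f.degree ≤ a.degree) (hg : g.degree < b.degree)
    (ha : a ≠ 0) : (f * g).degree < (a * b).degree := by
  rw [mul_comm f, mul_comm a]
  exact degree_mul_lt_left hg hf ha

theorem degree_add_lt {f g a : F[X]} (hf : f.degree < a.degree) (hg : g.degree < a.degree) :
    (f + g).degree < a.degree :=
  (degree_add_le f g).trans_lt (max_lt hf hg)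

theorem degree_C_mul_lt {f a : F[X]} (r : F) (hf : f.degree < a.degree) :
    (C r * f).degree < a.degree := by
  rw [← smul_eq_C_mul]
  exact (degree_smul_le r f).trans_lt hf

theorem degree_lt_of_degree_mul_lt {a₁ b₁ a₂ b₂ : F[X]} (h₀ : a₁ * a₂ ≠ 0)
    (h₁ : (a₁ * b₂ + b₁ * a₂).degree < (a₁ * a₂).degree)
    (h₂ : (b₁ * b₂).degree < (a₁ * a₂).degree) : b₁.degree < a₁.degree := by
  by_contra! h
  have h' : b₂.degree < a₂.degree := by
    by_contra! h'
    refine h₂.not_ge ?_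
    rw [degree_mul, degree_mul]
    exact add_le_add h h'
  have h₃ : (a₁ * b₂).degree < (a₁ * a₂).degree :=
    degree_mul_lt_right le_rfl h' (left_ne_zero_of_mul h₀)
  have h₄ : (a₁ * a₂).degree ≤ (b₁ * a₂).degree := by
    rw [degree_mul, degree_mul]; exact add_le_add_left h _
  rw [degree_add_eq_right_of_degree_lt (h₃.trans_le h₄)] at h₁
  exact h₁.not_ge h₄

theorem degree_eval_addSubMap (W : WeierstrassCurve F) {s t u : F[X]} (ht : t.degree < s.degree)
    (hu : u.degree < s.degree) :
    ((addSubMap (W.map C) 0).eval ![s, t, u]).degree = (s * s).degree ∧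
    ((addSubMap (W.map C) 1).eval ![s, t, u]).degree < (s * s).degree ∧
    ((addSubMap (W.map C) 2).eval ![s, t, u]).degree < (s * s).degree := by
  have hs : s ≠ 0 := by rintro rfl; simp at ht
  have hsu : (s * u).degree < (s * s).degree := degree_mul_lt_right le_rfl hu hs
  have hst : (s * t).degree < (s * s).degree := degree_mul_lt_right le_rfl ht hs
  have htu : (t * u).degree < (s * s).degree := degree_mul_lt_right ht.le hu hs
  have htt : (t * t).degree < (s * s).degree := degree_mul_lt_right ht.le ht hs
  have huu : (u * u).degree < (s * s).degree := degree_mul_lt_right hu.le hu hs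
  have e₀ : (addSubMap (W.map C) 0).eval ![s, t, u] =
      s * s + (C (-W.b₄) * (s * u) + (C (-W.b₆) * (t * u) + C (-W.b₈) * (u * u))) := by
    simp [addSubMap]; ring
  have e₁ : (addSubMap (W.map C) 1).eval ![s, t, u] =
      C 2 * (s * t) + (C W.b₂ * (s * u) + (C W.b₄ * (t * u) + C W.b₆ * (u * u))) := by
    simp [addSubMap, C_ofNat]; ring
  have e₂ : (addSubMap (W.map C) 2).eval ![s, t, u] = t * t + C (-4) * (s * u) := by
    simp [addSubMap, C_ofNat]; ring
  rw [e₀, e₁, e₂]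
  refine ⟨degree_add_eq_left_of_degree_lt ?_, ?_, degree_add_lt htt (degree_C_mul_lt _ hsu)⟩
  · exact degree_add_lt (degree_C_mul_lt _ hsu)
      (degree_add_lt (degree_C_mul_lt _ htu) (degree_C_mul_lt _ huu))
  · exact degree_add_lt (degree_C_mul_lt _ hst) <| degree_add_lt (degree_C_mul_lt _ hsu)
      (degree_add_lt (degree_C_mul_lt _ htu) (degree_C_mul_lt _ huu))

variable {K : Type*} [Field K] [Algebra F K] [Algebra F[X] K] [IsScalarTower F F[X] K]
  [FaithfulSMul F[X] K] {W : WeierstrassCurve F}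

theorem IsRep.degree_addSub [DecidableEq K] [W.IsElliptic] {P Q : (W.baseChange K).toAffine.Point}
    {a b c d a₁ b₁ a₂ b₂ : F[X]}
    (hP : IsRep P a b) (hQ : IsRep Q c d) (h₁ : IsRep (P + Q) a₁ b₁) (h₂ : IsRep (P - Q) a₂ b₂)
    (hab : b.degree < a.degree) (hcd : d.degree < c.degree) :
    b₁.degree < a₁.degree ∧ b₂.degree < a₂.degree ∧
      a₁.natDegree + a₂.natDegree = 2 * a.natDegree + 2 * c.natDegree := by
  obtain ⟨e, he, H⟩ := hP.addSub hQ h₁ h₂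
  have ha : a ≠ 0 := by rintro rfl; simp at hab
  have hc : c ≠ 0 := by rintro rfl; simp at hcd
  obtain ⟨d₀, d₁, d₂⟩ := degree_eval_addSubMap W (s := a * c) (t := a * d + b * c) (u := b * d)
    (degree_add_lt (degree_mul_lt_right le_rfl hcd ha) (degree_mul_lt_left hab le_rfl hc))
    (degree_mul_lt_left hab hcd.le hc)
  rw [H, degree_C_mul he] at d₀ d₁ d₂
  replace d₀ : (a₁ * a₂).degree = _ := d₀
  rw [← d₀] at d₁ d₂
  have h0 : a₁ * a₂ ≠ 0 := by
    intro h
    rw [h, degree_zero, eq_comm, degree_eq_bot] at d₀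
    exact mul_ne_zero (mul_ne_zero ha hc) (mul_ne_zero ha hc) d₀
  refine ⟨degree_lt_of_degree_mul_lt h0 d₁ d₂, degree_lt_of_degree_mul_lt (a₁ := a₂) (b₁ := b₂)
    (a₂ := a₁) (b₂ := b₁) (by rwa [mul_comm]) ?_ ?_, ?_⟩
  · rw [mul_comm a₂ a₁]
    convert d₁ using 2
    simp; ring
  · rw [mul_comm a₂ a₁, mul_comm b₂]
    exact d₂
  · have := natDegree_eq_of_degree_eq d₀
    rw [natDegree_mul (left_ne_zero_of_mul h0) (right_ne_zero_of_mul h0),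
      natDegree_mul (mul_ne_zero ha hc) (mul_ne_zero ha hc), natDegree_mul ha hc] at this
    omega

end Degree

/-- A presentation of `K` as the function field of `W`: `y` is the second coordinate of a generic
point whose first coordinate is the image of the polynomial variable. -/
structure GenericPoint {F : Type*} [Field F] (W : WeierstrassCurve F) (K : Type*) [Field K]
    [Algebra F K] [Algebra F[X] K] where
  y : K
  nonsingular : (W.baseChange K).toAffine.Nonsingular (algebraMap F[X] K X) y
  exists_algHom : ∀ x' y' : K, (W.baseChange K).toAffine.Equation x' y' → Transcendental F x' →
    ∃ σ : K →ₐ[F] K, σ (algebraMap F[X] K X) = x' ∧ σ y = y'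
  exists_mul_eq : ∀ z : K, ∃ a b c : F[X], c ≠ 0 ∧
    z * algebraMap F[X] K c = algebraMap F[X] K a + algebraMap F[X] K b * y
  eq_zero_of_add_mul_eq_zero : ∀ a b : F[X],
    algebraMap F[X] K a + algebraMap F[X] K b * y = 0 → a = 0 ∧ b = 0

section FunctionField

variable {F : Type*} [Field F] (W : WeierstrassCurve F)

theorem exists_coordinateRing_algHom {K : Type*} [Field K] [Algebra F K] {x' y' : K}
    (h : (W.baseChange K).toAffine.Equation x' y') :
    ∃ f : W.toAffine.CoordinateRing →ₐ[F] K, (∀ a : F[X], f (algebraMap _ _ a) = aeval x' a) ∧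
      f (CoordinateRing.mk W.toAffine X) = y' := by
  refine ⟨AdjoinRoot.liftAlgHom W.toAffine.polynomial (aeval x') y' ?_, fun a ↦ ?_, ?_⟩
  · have := ((W.baseChange K).toAffine.equation_iff _ _).1 h
    simp [polynomial, eval₂_add, eval₂_sub, eval₂_mul, eval₂_pow] at this ⊢
    linear_combination this
  · exact AdjoinRoot.liftAlgHom_of W.toAffine.polynomial (aeval x') y' _ a
  · exact AdjoinRoot.liftAlgHom_root ..

theorem coordinateRing_algHom_injective {K : Type*} [Field K] [Algebra F K] {x' : K}
    (hx : Transcendental F x') (f : W.toAffine.CoordinateRing →ₐ[F] K)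
    (hf : ∀ a : F[X], f (algebraMap _ _ a) = aeval x' a) : Function.Injective f := by
  have : Module.Finite F[X] W.toAffine.CoordinateRing :=
    .of_basis (CoordinateRing.basis W.toAffine)
  change Function.Injective (f : W.toAffine.CoordinateRing →+* K)
  rw [RingHom.injective_iff_ker_eq_bot]
  refine Ideal.eq_bot_of_comap_eq_bot (R := F[X]) (le_bot_iff.1 fun a ha ↦ ?_)
  rw [Ideal.mem_comap, RingHom.mem_ker] at ha
  exact transcendental_iff.1 hx a ((hf a).symm.trans ha)

theorem nonempty_genericPoint [W.IsElliptic] :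
    Nonempty (GenericPoint W W.toAffine.FunctionField) := by
  set K := W.toAffine.FunctionField
  set R := W.toAffine.CoordinateRing
  have hal (a : F[X]) : algebraMap F[X] K a = algebraMap R K (algebraMap F[X] R a) :=
    IsScalarTower.algebraMap_apply F[X] R K a
  have hinj : Function.Injective (algebraMap R K) := IsFractionRing.injective R K
  refine ⟨⟨algebraMap R K (CoordinateRing.mk W.toAffine X), ?_, ?_, ?_, ?_⟩⟩
  · have : (W.baseChange K).toAffine.IsElliptic :=
      inferInstanceAs (W.map (algebraMap F K)).IsElliptic
    refine (W.baseChange K).toAffine.equation_iff_nonsingular.1 ?_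
    obtain ⟨φ, hφC, hφX, hφ⟩ : ∃ φ : F[X][X] →+* K, (∀ a, φ (C a) = algebraMap F[X] K a) ∧
        φ X = algebraMap R K (CoordinateRing.mk W.toAffine X) ∧ φ W.toAffine.polynomial = 0 :=
      ⟨(algebraMap R K).comp (CoordinateRing.mk W.toAffine), fun a ↦ (hal a).symm, rfl, by
        rw [RingHom.comp_apply, show CoordinateRing.mk W.toAffine W.toAffine.polynomial = 0 from
          AdjoinRoot.mk_self, map_zero]⟩
    rw [← hφX, equation_iff]
    simp only [polynomial, map_sub, map_add, map_mul, map_pow, hφC] at hφ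
    have hC (r : F) : algebraMap F[X] K (C r) = algebraMap F K r :=
      (IsScalarTower.algebraMap_apply F F[X] K r).symm
    simp only [hC] at hφ
    change φ X ^ 2 + algebraMap F K W.a₁ * algebraMap F[X] K X * φ X + algebraMap F K W.a₃ * φ X =
      algebraMap F[X] K X ^ 3 + algebraMap F K W.a₂ * algebraMap F[X] K X ^ 2 +
        algebraMap F K W.a₄ * algebraMap F[X] K X + algebraMap F K W.a₆
    linear_combination hφ
  · intro x' y' h hx
    obtain ⟨f, hf, hf'⟩ := exists_coordinateRing_algHom W h
    have hfi := coordinateRing_algHom_injective W hx f hf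
    refine ⟨IsFractionRing.liftAlgHom (K := K) hfi, ?_, ?_⟩
    · rw [hal, IsFractionRing.liftAlgHom_apply, IsFractionRing.lift_algebraMap]
      exact (hf X).trans (aeval_X x')
    · rw [IsFractionRing.liftAlgHom_apply, IsFractionRing.lift_algebraMap]
      exact hf'
  · intro z
    obtain ⟨⟨n, d, hd⟩, h⟩ := IsLocalization.surj (nonZeroDivisors R) z
    have : Module.Finite F[X] R := .of_basis (CoordinateRing.basis W.toAffine)
    obtain ⟨c, hc, e, he⟩ := (Algebra.IsIntegral.isIntegral (R := F[X]) d).isAlgebraic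
      |>.exists_nonzero_dvd hd
    obtain ⟨a, b, hab⟩ := CoordinateRing.exists_smul_basis_eq (n * e)
    refine ⟨a, b, c, hc, ?_⟩
    rw [hal, hal, hal, he, map_mul, ← mul_assoc, ← map_mul, ← map_add]
    change z * algebraMap R K d = algebraMap R K n at h
    rw [h, ← map_mul, ← hab]
    rw [Algebra.smul_def, Algebra.smul_def, mul_one, map_add, map_mul]
  · intro a b h
    rw [hal, hal, ← map_mul, ← map_add] at h
    refine CoordinateRing.smul_basis_eq_zero (W' := W.toAffine) (hinj ?_)
    rw [map_zero, ← h, Algebra.smul_def, Algebra.smul_def, mul_one]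

end FunctionField

section Generic

set_option linter.unusedSectionVars false

variable {F K : Type*} [Field F] [Field K] [Algebra F K] [Algebra F[X] K] [IsScalarTower F F[X] K]
  [FaithfulSMul F[X] K]

theorem algHom_algebraMap {L : Type*} [CommRing L] [Algebra F L] (σ : K →ₐ[F] L) (a : F[X]) :
    σ (algebraMap F[X] K a) = aeval (σ (algebraMap F[X] K X)) a := by
  rw [aeval_algHom_apply, aeval_algebraMap_apply, aeval_X_left_apply]

theorem transcendental_algebraMap_X : Transcendental F (algebraMap F[X] K X) := by
  rw [transcendental_iff]
  intro p hp
  rw [aeval_algebraMap_apply, aeval_X_left_apply] at hp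
  exact FaithfulSMul.algebraMap_injective F[X] K (hp.trans (map_zero _).symm)

variable {W : WeierstrassCurve F} (g : GenericPoint W K)

namespace GenericPoint

/-- The generic point of `W` over its function field. -/
noncomputable def point : (W.baseChange K).toAffine.Point := .some _ _ g.nonsingular

theorem isRep_point : IsRep g.point X 1 :=
  isRep_some_iff.2 ⟨isCoprime_one_right, by simp⟩

theorem exists_map_eq [DecidableEq K] {x' y' : K} (h : (W.baseChange K).toAffine.Nonsingular x' y')
    (hx : Transcendental F x') :
    ∃ σ : K →ₐ[F] K, Point.map (W' := W.toAffine) σ g.point = .some x' y' h := by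
  obtain ⟨σ, rfl, rfl⟩ := g.exists_algHom x' y' h.1 hx
  exact ⟨σ, Point.map_some (W' := W.toAffine) σ _⟩

theorem exists_negHom : ∃ ι : K →ₐ[F] K, ι (algebraMap F[X] K X) = algebraMap F[X] K X ∧
    ι g.y = (W.baseChange K).toAffine.negY (algebraMap F[X] K X) g.y :=
  g.exists_algHom _ _ ((nonsingular_neg ..).2 g.nonsingular).1 transcendental_algebraMap_X

/-- The automorphism of the function field of `W` induced by negation. -/
noncomputable def negHom : K →ₐ[F] K := g.exists_negHom.choose

theorem negHom_algebraMap (a : F[X]) : g.negHom (algebraMap F[X] K a) = algebraMap F[X] K a := by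
  rw [algHom_algebraMap, negHom, g.exists_negHom.choose_spec.1, aeval_algebraMap_apply,
    aeval_X_left_apply]

theorem negHom_y : g.negHom g.y = -g.y - algebraMap F[X] K (C W.a₁ * X + C W.a₃) := by
  have hC (r : F) : algebraMap F[X] K (C r) = algebraMap F K r :=
    (IsScalarTower.algebraMap_apply F F[X] K r).symm
  rw [negHom, g.exists_negHom.choose_spec.2, negY, map_add, map_mul, hC, hC]
  simp
  ring

theorem map_negHom_point [DecidableEq K] :
    Point.map (W' := W.toAffine) g.negHom g.point = -g.point := by
  rw [point, Point.map_some, Point.neg_some]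
  congr 1
  · exact g.exists_negHom.choose_spec.1
  · exact g.exists_negHom.choose_spec.2

theorem exists_mul_eq_of_negHom_eq [W.IsElliptic] {z : K} (hz : g.negHom z = z) :
    ∃ a b : F[X], b ≠ 0 ∧ z * algebraMap F[X] K b = algebraMap F[X] K a := by
  obtain ⟨a, b, c, hc, h⟩ := g.exists_mul_eq z
  have h' := congr_arg g.negHom h
  rw [map_mul, map_add, map_mul, hz, negHom_algebraMap, negHom_algebraMap, negHom_algebraMap,
    negHom_y, h] at h'
  obtain ⟨h₁, h₂⟩ := g.eq_zero_of_add_mul_eq_zero (b * (C W.a₁ * X + C W.a₃)) (2 * b) (by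
    rw [map_mul, map_mul, map_ofNat]
    linear_combination h')
  refine ⟨a, c, hc, ?_⟩
  by_cases hb : b = 0
  · simpa [hb] using h
  have h2 : (2 : F) = 0 := by
    have : (2 : F[X]) = 0 := (mul_eq_zero.1 h₂).resolve_right hb
    simpa using congr_arg (eval 0) this
  have h3 : C W.a₁ * X + C W.a₃ = 0 := (mul_eq_zero.1 h₁).resolve_left hb
  have ha₃ : W.a₃ = 0 := by simpa using congr_arg (eval 0) h3
  have ha₁ : W.a₁ = 0 := by simpa [ha₃] using congr_arg (eval 1) h3
  refine absurd ?_ W.isUnit_Δ.ne_zero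
  simp only [Δ, b₂, b₄, b₆, b₈, ha₁, ha₃]
  linear_combination (exp := 1) (-8 * W.a₂ ^ 2 * (4 * W.a₂ * W.a₆ - W.a₄ ^ 2) - 32 * W.a₄ ^ 3
    - 216 * W.a₆ ^ 2 + 144 * W.a₂ * W.a₄ * W.a₆) * h2

theorem exists_isRep [DecidableEq K] [W.IsElliptic] {P : (W.baseChange K).toAffine.Point}
    (hP : Point.map (W' := W.toAffine) g.negHom P = -P) : ∃ a b, IsRep P a b := by
  rcases P with _ | ⟨x, y, h⟩
  · exact ⟨1, 0, isRep_zero_iff.2 ⟨isUnit_one, rfl⟩⟩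
  · rw [Point.map_some, Point.neg_some, Point.some.injEq] at hP
    obtain ⟨a, b, hb, hab⟩ := g.exists_mul_eq_of_negHom_eq hP.1
    obtain ⟨d, a', b', r, s, hd, rfl, rfl, hrs⟩ : ∃ d a' b' r s : F[X],
        d ≠ 0 ∧ a = d * a' ∧ b = d * b' ∧ d = a * r + b * s := by
      classical
      obtain ⟨a', ha⟩ := EuclideanDomain.gcd_dvd_left a b
      obtain ⟨b', hb'⟩ := EuclideanDomain.gcd_dvd_right a b
      exact ⟨_, a', b', _, _, fun h ↦ hb (EuclideanDomain.gcd_eq_zero_iff.1 h).2, ha, hb',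
        EuclideanDomain.gcd_eq_gcd_ab a b⟩
    refine ⟨a', b', isRep_some_iff.2 ⟨⟨r, s, mul_left_cancel₀ hd ?_⟩, mul_left_cancel₀
      (a := algebraMap F[X] K d) (by rwa [Ne, FaithfulSMul.algebraMap_eq_zero_iff]) ?_⟩⟩
    · linear_combination -hrs
    · rw [← mul_assoc, ← map_mul, ← map_mul, ← hab, mul_comm]

end GenericPoint

open Classical in
/-- The degree of the numerator of the `x`-coordinate of a point. -/
noncomputable def height (P : (W.baseChange K).toAffine.Point) : ℕ :=
  if h : ∃ ab : F[X] × F[X], IsRep P ab.1 ab.2 then h.choose.1.natDegree else 0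

theorem IsRep.height_eq {P : (W.baseChange K).toAffine.Point} {a b : F[X]} (h : IsRep P a b) :
    height P = a.natDegree := by
  have H : ∃ ab : F[X] × F[X], IsRep P ab.1 ab.2 := ⟨(a, b), h⟩
  rw [height, dif_pos H]
  obtain ⟨e, he, h', -⟩ := H.choose_spec.exists_unit h
  rw [h', natDegree_C_mul he]

namespace GenericPoint

/-- The points corresponding to endomorphisms of `W`: those which anticommute with negation of the
generic point and whose `x`-coordinate has a pole at infinity. -/
noncomputable def endPoints [DecidableEq K] [W.IsElliptic] :
    AddSubgroup (W.baseChange K).toAffine.Point :=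
  .ofSub {P | Point.map (W' := W.toAffine) g.negHom P = -P ∧
      ∃ a b, IsRep P a b ∧ b.degree < a.degree}
    ⟨0, by simp, 1, 0, isRep_zero_iff.2 ⟨isUnit_one, rfl⟩, by simp⟩ (by
    rintro P ⟨hP, a, b, hab, h⟩ Q ⟨hQ, c, d, hcd, h'⟩
    have hs : Point.map (W' := W.toAffine) g.negHom (P - Q) = -(P - Q) := by
      rw [map_sub, hP, hQ]; abel
    have ha : Point.map (W' := W.toAffine) g.negHom (P + Q) = -(P + Q) := by
      rw [map_add, hP, hQ]; abel
    obtain ⟨a₁, b₁, h₁⟩ := g.exists_isRep ha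
    obtain ⟨a₂, b₂, h₂⟩ := g.exists_isRep hs
    rw [← sub_eq_add_neg]
    exact ⟨hs, a₂, b₂, h₂, (hab.degree_addSub hcd h₁ h₂ h h').2.1⟩)

variable [DecidableEq K] [W.IsElliptic] {P Q : (W.baseChange K).toAffine.Point} {g}

theorem exists_isRep_of_mem (h : P ∈ g.endPoints) :
    ∃ a b, IsRep P a b ∧ b.degree < a.degree ∧ height P = a.natDegree := by
  obtain ⟨a, b, hab, h⟩ := h.2
  exact ⟨a, b, hab, h, hab.height_eq⟩

variable (g) in
theorem point_mem : g.point ∈ g.endPoints :=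
  ⟨g.map_negHom_point, X, 1, g.isRep_point, by rw [degree_X, degree_one]; exact zero_lt_one⟩

theorem height_add_add_height_sub (hP : P ∈ g.endPoints) (hQ : Q ∈ g.endPoints) :
    height (P + Q) + height (P - Q) = 2 * height P + 2 * height Q := by
  obtain ⟨a, b, h, hab, e⟩ := exists_isRep_of_mem hP
  obtain ⟨c, d, h', hcd, e'⟩ := exists_isRep_of_mem hQ
  obtain ⟨a₁, b₁, h₁, -, e₁⟩ := exists_isRep_of_mem (add_mem hP hQ)
  obtain ⟨a₂, b₂, h₂, -, e₂⟩ := exists_isRep_of_mem (sub_mem hP hQ)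
  rw [e, e', e₁, e₂]
  exact (h.degree_addSub h' h₁ h₂ hab hcd).2.2

theorem eq_zero_of_height_eq_zero (hP : P ∈ g.endPoints) (h : height P = 0) : P = 0 := by
  obtain ⟨a, b, hab, hd, e⟩ := exists_isRep_of_mem hP
  rw [e] at h
  have ha : a ≠ 0 := by rintro rfl; simp at hd
  have hb : b = 0 := by
    by_contra hb
    have := natDegree_lt_natDegree hb hd
    omega
  rcases P with _ | ⟨x, y, hxy⟩
  · rfl
  · have := (isRep_some_iff.1 hab).2
    rw [hb, map_zero, zero_mul, FaithfulSMul.algebraMap_eq_zero_iff] at this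
    exact absurd this ha

variable (g) in
theorem height_point : height g.point = 1 := by
  rw [g.isRep_point.height_eq, natDegree_X]

end GenericPoint

theorem height_zero : height (0 : (W.baseChange K).toAffine.Point) = 0 := by
  rw [(isRep_zero_iff.2 ⟨isUnit_one, rfl⟩ : IsRep _ (1 : F[X]) 0).height_eq, natDegree_one]

end Generic

theorem eq_of_add_add_sub_eq {f : ℤ → ℤ} {k : ℤ} (h : ∀ n, f (n + 1) + f (n - 1) = 2 * f n + 2 * k)
    (n : ℤ) : f n = f 0 + n * (f 1 - f 0 - k) + n ^ 2 * k := by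
  suffices f n = f 0 + n * (f 1 - f 0 - k) + n ^ 2 * k ∧
      f (n + 1) = f 0 + (n + 1) * (f 1 - f 0 - k) + (n + 1) ^ 2 * k from this.1
  induction n using Int.induction_on with
  | zero => simp; ring
  | succ n ih =>
    refine ⟨ih.2, ?_⟩
    have := h (n + 1)
    rw [add_sub_cancel_right] at this
    linear_combination this + 2 * ih.2 - ih.1
  | pred n ih =>
    rw [sub_add_cancel]
    refine ⟨?_, ih.1⟩
    linear_combination h (-n) + 2 * ih.1 - ih.2

theorem quadratic_of_parallelogram {G : Type*} [AddCommGroup G] {h : G → ℤ}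
    (h0 : h 0 = 0) (hp : ∀ x y, h (x + y) + h (x - y) = 2 * h x + 2 * h y) (x y : G) (m n : ℤ) :
    h (m • x + n • y) = m ^ 2 * h x + m * n * (h (x + y) - h x - h y) + n ^ 2 * h y := by
  have key (x y : G) (n : ℤ) : h (x + n • y) = h x + n * (h (x + y) - h x - h y) + n ^ 2 * h y := by
    have := eq_of_add_add_sub_eq (f := fun n ↦ h (x + n • y)) (k := h y) (fun n ↦ by
      rw [← hp, add_smul, sub_smul, one_smul, ← add_assoc, ← add_sub_assoc]) n
    simpa using this
  have hsmul (n : ℤ) : h (n • y) = n ^ 2 * h y := by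
    simpa [h0] using key 0 y n
  rw [add_comm, key, add_comm (n • y), key, hsmul]
  ring

section Generic

set_option linter.unusedSectionVars false

variable {F K : Type*} [Field F] [Field K] [Algebra F K] [Algebra F[X] K] [IsScalarTower F F[X] K]
  [FaithfulSMul F[X] K] {W : WeierstrassCurve F} {g : GenericPoint W K}
  [DecidableEq K] [W.IsElliptic] {P Q : (W.baseChange K).toAffine.Point}

namespace GenericPoint

theorem height_zsmul_add_zsmul (hP : P ∈ g.endPoints) (hQ : Q ∈ g.endPoints) (m n : ℤ) :
    (height (m • P + n • Q) : ℤ) = m ^ 2 * height P +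
      m * n * (height (P + Q) - height P - height Q) + n ^ 2 * height Q :=
  quadratic_of_parallelogram (G := g.endPoints) (h := fun P ↦ (height P.1 : ℤ))
    (by simp [height_zero]) (fun x y ↦ mod_cast height_add_add_height_sub x.2 y.2) ⟨P, hP⟩ ⟨Q, hQ⟩ m n

theorem height_zsmul (hP : P ∈ g.endPoints) (m : ℤ) :
    (height (m • P) : ℤ) = m ^ 2 * height P := by
  simpa using height_zsmul_add_zsmul hP hP m 0

theorem eq_zero_of_zsmul_eq_zero (hP : P ∈ g.endPoints) {m : ℤ} (hm : m ≠ 0)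
    (h : m • P = 0) : P = 0 := by
  have := height_zsmul hP m
  rw [h, height_zero, Nat.cast_zero, eq_comm, mul_eq_zero] at this
  exact eq_zero_of_height_eq_zero hP (by simpa using this.resolve_left (pow_ne_zero 2 hm))

end GenericPoint

end Generic

section HomComp

variable {F : Type*} [Field F]

/-- The polynomial `dⁿ a(c / d)`. -/
noncomputable def homComp (n : ℕ) (a c d : F[X]) : F[X] :=
  ∑ i ∈ Finset.range (n + 1), C (a.coeff i) * (c ^ i * d ^ (n - i))

theorem homComp_eq (n : ℕ) (a c d : F[X]) : homComp n a c d =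
    (∑ i ∈ Finset.range n, C (a.coeff i) * (c ^ i * d ^ (n - i))) + C (a.coeff n) * c ^ n := by
  rw [homComp, Finset.sum_range_succ, Nat.sub_self, pow_zero, mul_one]

theorem algebraMap_homComp {L : Type*} [Field L] [Algebra F L] [Algebra F[X] L]
    [IsScalarTower F F[X] L] {n : ℕ} {a c d : F[X]} {x : L} (ha : a.natDegree ≤ n)
    (h : algebraMap F[X] L c = algebraMap F[X] L d * x) :
    algebraMap F[X] L (homComp n a c d) = algebraMap F[X] L d ^ n * aeval x a := by
  rw [aeval_eq_sum_range' (Nat.lt_succ_of_le ha), homComp, map_sum, Finset.mul_sum]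
  refine Finset.sum_congr rfl fun i hi ↦ ?_
  have hi : i ≤ n := Finset.mem_range_succ_iff.1 hi
  have hC (r : F) : algebraMap F[X] L (C r) = algebraMap F L r :=
    (IsScalarTower.algebraMap_apply F F[X] L r).symm
  rw [map_mul, map_mul, map_pow, map_pow, h, hC, Algebra.smul_def, mul_pow]
  conv_rhs => rw [← Nat.add_sub_cancel' hi, pow_add]
  ring

theorem exists_algebraMap_eq_mul {c d : F[X]} (hd : d ≠ 0) :
    ∃ x : FractionRing F[X], algebraMap F[X] (FractionRing F[X]) c =
      algebraMap F[X] (FractionRing F[X]) d * x :=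
  ⟨algebraMap F[X] _ c / algebraMap F[X] _ d, by
    rw [mul_div_cancel₀]
    rwa [Ne, FaithfulSMul.algebraMap_eq_zero_iff]⟩

theorem homComp_mul {m n : ℕ} {a b c d : F[X]} (ha : a.natDegree ≤ m) (hb : b.natDegree ≤ n)
    (hd : d ≠ 0) : homComp (m + n) (a * b) c d = homComp m a c d * homComp n b c d := by
  obtain ⟨x, hx⟩ := exists_algebraMap_eq_mul (c := c) hd
  apply FaithfulSMul.algebraMap_injective F[X] (FractionRing F[X])
  rw [map_mul, algebraMap_homComp ha hx, algebraMap_homComp hb hx,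
    algebraMap_homComp (natDegree_mul_le.trans (add_le_add ha hb)) hx, map_mul]
  ring

theorem homComp_add (n : ℕ) (a b c d : F[X]) :
    homComp n (a + b) c d = homComp n a c d + homComp n b c d := by
  simp only [homComp, ← Finset.sum_add_distrib, coeff_add, C_add, add_mul]

theorem homComp_one (n : ℕ) (c d : F[X]) : homComp n 1 c d = d ^ n := by
  rw [homComp, Finset.sum_range_succ', Finset.sum_eq_zero]
  · simp
  · intro i _
    simp [coeff_one]

theorem dvd_homComp_sub (n : ℕ) (a c d : F[X]) :
    d ∣ homComp n a c d - C (a.coeff n) * c ^ n := by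
  rw [homComp_eq, add_sub_cancel_right]
  refine Finset.dvd_sum fun i hi ↦ ?_
  have := Finset.mem_range.1 hi
  exact ((dvd_pow_self d (by omega)).mul_left _).mul_left _

theorem isCoprime_homComp {a b c d : F[X]} (hab : IsCoprime a b) (ha : a ≠ 0)
    (hba : b.natDegree ≤ a.natDegree) (hcd : IsCoprime c d) (hd : d ≠ 0) :
    IsCoprime (homComp a.natDegree a c d) (homComp a.natDegree b c d) := by
  set n := a.natDegree with hn
  have hAd : IsCoprime (homComp n a c d) d := by
    obtain ⟨e, he⟩ := dvd_homComp_sub n a c d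
    rw [sub_eq_iff_eq_add'.1 he]
    refine IsCoprime.add_mul_left_left ?_ e
    exact (isCoprime_mul_unit_left_left
      (isUnit_C.2 (IsUnit.mk0 (a.coeff n) (leadingCoeff_ne_zero.2 ha))) _ _).2 hcd.pow_left
  obtain ⟨r, s, hrs⟩ := hab
  set m := max r.natDegree s.natDegree
  have key : d ^ (m + n) = homComp m r c d * homComp n a c d + homComp m s c d * homComp n b c d := by
    rw [← homComp_one _ c d, ← hrs, homComp_add, homComp_mul (le_max_left _ _) le_rfl hd,
      homComp_mul (le_max_right _ _) hba hd]
  have h := hAd.pow_right (n := m + n)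
  rw [key, add_comm, mul_comm _ (homComp n a c d)] at h
  exact (IsCoprime.of_add_mul_left_right h).of_mul_right_right

theorem degree_pow_lt_degree_pow {c d : F[X]} (h : d.degree < c.degree) {n : ℕ} (hn : n ≠ 0) :
    (d ^ n).degree < (c ^ n).degree := by
  have hc : c ≠ 0 := by rintro rfl; simp at h
  induction n with
  | zero => exact absurd rfl hn
  | succ n ih =>
    rw [pow_succ, pow_succ]
    rcases eq_or_ne n 0 with rfl | hn
    · simpa using h
    · exact degree_mul_lt_right (ih hn).le h (pow_ne_zero _ hc)

theorem degree_homComp_sub_lt (n : ℕ) (a : F[X]) {c d : F[X]} (h : d.degree < c.degree) :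
    (homComp n a c d - C (a.coeff n) * c ^ n).degree < (c ^ n).degree := by
  have hc : c ≠ 0 := by rintro rfl; simp at h
  rw [homComp_eq, add_sub_cancel_right]
  refine Finset.sum_induction _ (fun p : F[X] ↦ p.degree < (c ^ n).degree)
    (fun _ _ ↦ degree_add_lt) ?_ fun i hi ↦ degree_C_mul_lt _ ?_
  · rw [degree_zero, bot_lt_iff_ne_bot, Ne, degree_eq_bot]
    exact pow_ne_zero _ hc
  · have := Finset.mem_range.1 hi
    rw [← Nat.add_sub_cancel' this.le, pow_add, Nat.add_sub_cancel_left]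
    exact degree_mul_lt_right le_rfl (degree_pow_lt_degree_pow h (by omega)) (pow_ne_zero _ hc)

theorem degree_homComp {n : ℕ} {a c d : F[X]} (h : d.degree < c.degree) (ha : a.coeff n ≠ 0) :
    (homComp n a c d).degree = (c ^ n).degree := by
  rw [← sub_add_cancel (homComp n a c d) (C (a.coeff n) * c ^ n),
    degree_add_eq_right_of_degree_lt, degree_C_mul ha]
  rw [degree_C_mul ha]
  exact degree_homComp_sub_lt n a h

end HomComp

section Generic

set_option linter.unusedSectionVars false

variable {F K : Type*} [Field F] [Field K] [Algebra F K] [Algebra F[X] K] [IsScalarTower F F[X] K]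
  [FaithfulSMul F[X] K] {W : WeierstrassCurve F} {g : GenericPoint W K}

theorem transcendental_of_degree_lt {c d : F[X]} {x : K} (h : d.degree < c.degree)
    (hx : algebraMap F[X] K c = algebraMap F[X] K d * x) : Transcendental F x := by
  rw [transcendental_iff]
  intro p hp
  by_contra hp0
  have := algebraMap_homComp (n := p.natDegree) le_rfl hx
  rw [hp, mul_zero, FaithfulSMul.algebraMap_eq_zero_iff] at this
  have h' := degree_homComp h (a := p) (leadingCoeff_ne_zero.2 hp0)
  rw [this, degree_zero, eq_comm, degree_eq_bot] at h'
  exact pow_ne_zero _ (by rintro rfl; simp at h) h'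

variable [DecidableEq K] {P Q : (W.baseChange K).toAffine.Point}

theorem IsRep.map {a b c d : F[X]} (hP : IsRep P a b) (hba : b.degree < a.degree)
    (hcd : IsCoprime c d) (hd : d ≠ 0) {σ : K →ₐ[F] K}
    (hσ : algebraMap F[X] K c = algebraMap F[X] K d * σ (algebraMap F[X] K X)) :
    IsRep (Point.map (W' := W.toAffine) σ P) (homComp a.natDegree a c d)
      (homComp a.natDegree b c d) := by
  have ha : a ≠ 0 := by rintro rfl; simp at hba
  have hle := natDegree_le_natDegree hba.le
  refine ⟨isCoprime_homComp hP.1 ha hle hcd hd, ?_⟩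
  rw [algebraMap_homComp le_rfl hσ, algebraMap_homComp hle hσ, ← algHom_algebraMap,
    ← algHom_algebraMap]
  have := congr_arg σ hP.eq
  rcases P with _ | ⟨x, y, h⟩
  · rw [← Point.zero_def] at this ⊢
    simp at this ⊢
    exact .inr (by simpa using this.symm)
  · rw [Point.map_some]
    simp at this ⊢
    rw [this, mul_assoc]

namespace GenericPoint

theorem ne_zero_of_isRep {c d : F[X]} (hQ : IsRep Q c d) (hc : c ≠ 0) (h : Q ≠ 0) : d ≠ 0 := by
  rintro rfl
  rcases Q with _ | ⟨x, y, hxy⟩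
  · exact h rfl
  · have := (isRep_some_iff.1 hQ).2
    rw [map_zero, zero_mul, FaithfulSMul.algebraMap_eq_zero_iff] at this
    exact hc this

theorem exists_algHom_of_isRep {c d : F[X]} (hQ : IsRep Q c d) (hdc : d.degree < c.degree)
    (h : Q ≠ 0) : ∃ σ : K →ₐ[F] K, Point.map (W' := W.toAffine) σ g.point = Q ∧
      algebraMap F[X] K c = algebraMap F[X] K d * σ (algebraMap F[X] K X) := by
  rcases Q with _ | ⟨x, y, hxy⟩
  · exact absurd rfl h
  · have := (isRep_some_iff.1 hQ).2
    obtain ⟨σ, hσ⟩ := g.exists_map_eq hxy (transcendental_of_degree_lt hdc this)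
    refine ⟨σ, hσ, ?_⟩
    rw [point, Point.map_some, Point.some.injEq] at hσ
    rw [hσ.1, this]

theorem exists_algHom_of_mem [W.IsElliptic] (hQ : Q ∈ g.endPoints) (h : Q ≠ 0) :
    ∃ σ : K →ₐ[F] K, Point.map (W' := W.toAffine) σ g.point = Q ∧
      ∀ P ∈ g.endPoints, height (Point.map (W' := W.toAffine) σ P) = height P * height Q := by
  obtain ⟨c, d, hcd, hdc, e⟩ := exists_isRep_of_mem hQ
  obtain ⟨σ, hσ, hσ'⟩ := exists_algHom_of_isRep (g := g) hcd hdc h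
  refine ⟨σ, hσ, fun P hP ↦ ?_⟩
  obtain ⟨a, b, hab, hba, e'⟩ := exists_isRep_of_mem hP
  have hc : c ≠ 0 := by rintro rfl; simp at hdc
  have ha : a ≠ 0 := by rintro rfl; simp at hba
  rw [(hab.map hba hcd.1 (ne_zero_of_isRep hcd hc h) hσ').height_eq, e, e',
    natDegree_eq_of_degree_eq (degree_homComp hdc (leadingCoeff_ne_zero.2 ha)), natDegree_pow]

end GenericPoint

end Generic

theorem add_add_of_parallelogram {G : Type*} [AddCommGroup G] {h : G → ℤ}
    (hp : ∀ x y, h (x + y) + h (x - y) = 2 * h x + 2 * h y) (x y z : G) :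
    h (x + y + z) = h (x + y) + h (x + z) + h (y + z) - h x - h y - h z := by
  have h₁ := hp (x + y) z
  have h₂ := hp x (y - z)
  have h₃ := hp (x + z) y
  have h₄ := hp y z
  rw [← add_sub_assoc, show x - (y - z) = x + z - y by abel] at h₂
  rw [show x + z + y = x + y + z by abel] at h₃
  linarith

section Generic

set_option linter.unusedSectionVars false

variable {F K : Type*} [Field F] [Field K] [Algebra F K] [Algebra F[X] K] [IsScalarTower F F[X] K]
  [FaithfulSMul F[X] K] {W : WeierstrassCurve F} {g : GenericPoint W K} [DecidableEq K]
  {P Q R : (W.baseChange K).toAffine.Point}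

namespace GenericPoint

theorem height_add_add [W.IsElliptic] (hP : P ∈ g.endPoints) (hQ : Q ∈ g.endPoints)
    (hR : R ∈ g.endPoints) :
    (height (P + Q + R) : ℤ) = height (P + Q) + height (P + R) + height (Q + R) -
      height P - height Q - height R :=
  add_add_of_parallelogram (G := g.endPoints) (h := fun P ↦ (height P.1 : ℤ))
    (fun x y ↦ mod_cast height_add_add_height_sub x.2 y.2) ⟨P, hP⟩ ⟨Q, hQ⟩ ⟨R, hR⟩

end GenericPoint

variable [Fintype F]

/-- The action of the Frobenius of `F` on the points of `W` over `K`. -/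
noncomputable def frob :
    (W.baseChange K).toAffine.Point →+ (W.baseChange K).toAffine.Point :=
  Point.map (W' := W.toAffine) (FiniteField.frobeniusAlgHom F K)

theorem map_frob (σ : K →ₐ[F] K) (P : (W.baseChange K).toAffine.Point) :
    Point.map (W' := W.toAffine) σ (frob P) = frob (Point.map (W' := W.toAffine) σ P) := by
  rw [frob, Point.map_map, Point.map_map]
  congr 2
  ext z
  simp [FiniteField.coe_frobeniusAlgHom]

theorem IsRep.frob {a b : F[X]} (h : IsRep P a b) :
    IsRep (frob P) (a ^ Fintype.card F) (b ^ Fintype.card F) := by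
  refine ⟨h.1.pow, ?_⟩
  have := congr_arg (· ^ Fintype.card F) h.eq
  rcases P with _ | ⟨x, y, hxy⟩
  · rw [← Point.zero_def, map_zero] at *
    simpa [Fintype.card_ne_zero] using this
  · rw [SupersingularFrobenius.frob, Point.map_some]
    simpa [mul_pow, FiniteField.coe_frobeniusAlgHom] using this

namespace GenericPoint

theorem isRep_iterate_frob (n : ℕ) :
    IsRep (frob^[n] g.point) (X ^ Fintype.card F ^ n) 1 := by
  induction n with
  | zero => simpa using g.isRep_point
  | succ n ih =>
    rw [Function.iterate_succ_apply', pow_succ, pow_mul]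
    simpa using ih.frob

theorem isRep_frob : IsRep (frob g.point) (X ^ Fintype.card F) 1 := by
  simpa using g.isRep_iterate_frob 1

variable [W.IsElliptic]

theorem frob_mem (h : P ∈ g.endPoints) : frob P ∈ g.endPoints := by
  obtain ⟨a, b, hab, hba⟩ := h.2
  refine ⟨?_, _, _, hab.frob, degree_pow_lt_degree_pow hba Fintype.card_ne_zero⟩
  rw [map_frob, h.1, map_neg]

theorem height_frob (h : P ∈ g.endPoints) : height (frob P) = Fintype.card F * height P := by
  obtain ⟨a, b, hab, hba, e⟩ := exists_isRep_of_mem h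
  rw [hab.frob.height_eq, e, natDegree_pow]

variable (g) in
theorem height_zsmul_frob_add_zsmul {t : ℤ}
    (ht : (height (frob g.point - g.point) : ℤ) = Fintype.card F + 1 - t) (m n : ℤ) :
    (height (m • frob g.point + n • g.point) : ℤ) = m ^ 2 * Fintype.card F + m * n * t + n ^ 2 := by
  have hP := g.point_mem
  have hQ := frob_mem hP
  have := height_add_add_height_sub hQ hP
  zify at this
  rw [height_zsmul_add_zsmul hQ hP, height_frob hP, height_point] at *
  push_cast at *
  linear_combination (m * n) * this - m * n * ht

variable (g) in
theorem height_frob_add {t : ℤ}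
    (ht : (height (frob g.point - g.point) : ℤ) = Fintype.card F + 1 - t) :
    (height (frob g.point + g.point) : ℤ) = Fintype.card F + 1 + t := by
  have := g.height_zsmul_frob_add_zsmul ht 1 1
  simp only [one_smul] at this
  linear_combination this

variable (g) in
theorem height_frob_frob_sub {t : ℤ}
    (ht : (height (frob g.point - g.point) : ℤ) = Fintype.card F + 1 - t) :
    (height (frob (frob g.point) - g.point) : ℤ) =
      (Fintype.card F + 1 - t) * (Fintype.card F + 1 + t) := by
  have hP := g.point_mem
  have hQ := add_mem (frob_mem hP) hP
  have e : frob (frob g.point) - g.point =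
      frob (frob g.point + g.point) - (frob g.point + g.point) := by
    rw [map_add]; abel
  rw [← g.height_frob_add ht, ← ht, e]
  by_cases h : frob g.point + g.point = 0
  · simp [h, height_zero]
  · obtain ⟨σ, hσ, H⟩ := exists_algHom_of_mem hQ h
    have := H _ (sub_mem (frob_mem hP) hP)
    rw [map_sub, map_frob, hσ] at this
    exact_mod_cast this

variable (g) in
theorem frob_frob_eq {t : ℤ}
    (ht : (height (frob g.point - g.point) : ℤ) = Fintype.card F + 1 - t) :
    frob (frob g.point) = t • frob g.point - (Fintype.card F : ℤ) • g.point := by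
  set q : ℤ := (Fintype.card F : ℤ) with hq
  have hP := g.point_mem
  have hQ := frob_mem hP
  have hR := frob_mem hQ
  have h₁ := height_add_add hR (zsmul_mem hQ (-t)) (zsmul_mem hP q)
  have h₂ := height_zsmul_add_zsmul hR hQ 1 (-t)
  have h₃ := height_zsmul_add_zsmul hR hP 1 q
  have h₄ := g.height_zsmul_frob_add_zsmul ht (-t) q
  have h₅ := g.height_frob_frob_sub ht
  have h₆ := height_add_add_height_sub hR hP
  have h₇ : (height (frob (frob g.point) + frob g.point) : ℤ) = q * (q + 1 + t) := by
    rw [← g.height_frob_add ht, ← map_add, height_frob (add_mem hQ hP)]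
    push_cast; rfl
  have h₈ := height_zsmul hQ (-t)
  have h₉ := height_zsmul hP q
  zify at h₆
  rw [one_smul] at h₂ h₃
  rw [height_point] at h₃ h₆ h₉
  rw [height_frob hP, height_point] at h₂ h₈
  rw [height_frob hQ, height_frob hP, height_point] at h₁ h₂ h₃ h₆
  push_cast at *
  rw [← hq] at *
  have hz : (height (frob (frob g.point) + -t • frob g.point + q • g.point) : ℤ) = 0 := by
    rw [h₁, h₂, h₃, h₄, h₇, h₈, h₉]
    linear_combination q * h₆ - q * h₅
  have := eq_zero_of_height_eq_zero
    (add_mem (add_mem hR (zsmul_mem hQ (-t))) (zsmul_mem hP q)) (by exact_mod_cast hz)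
  rw [← sub_eq_zero, ← this, neg_smul]
  abel

end GenericPoint

end Generic

theorem homComp_one_right {F : Type*} [Field F] {n : ℕ} {a : F[X]} (ha : a.natDegree ≤ n)
    (c : F[X]) : homComp n a c 1 = a.comp c := by
  rw [homComp, comp, eval₂_eq_sum_range' _ (Nat.lt_succ_of_le ha)]
  simp

theorem eq_C_mul_X_sub_C_pow_of_comp_eq {F : Type*} [Field F] {a c : F[X]} {e : F} {n : ℕ}
    (he : e ≠ 0) (hc : c.natDegree ≠ 0) (h : a.comp c = C e * X ^ n) :
    ∃ k δ : F, a = C k * (X - C δ) ^ a.natDegree := by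
  have ha : a ≠ 0 := by
    rintro rfl
    rw [zero_comp] at h
    exact mul_ne_zero (C_ne_zero.2 he) (pow_ne_zero _ X_ne_zero) h.symm
  obtain ⟨a', ha', hdvd⟩ := exists_eq_pow_rootMultiplicity_mul_and_not_dvd a ha (c.eval 0)
  set m := rootMultiplicity (c.eval 0) a
  set δ := c.eval 0 with hδ
  have h1 : ¬ X ∣ a'.comp c := by
    rwa [X_dvd_iff, coeff_zero_eq_eval_zero, eval_comp, ← hδ, ← IsRoot.def, ← dvd_iff_isRoot]
  have h2 : IsCoprime (a'.comp c) (X ^ n) :=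
    ((irreducible_X.coprime_iff_not_dvd).2 h1).symm.pow_right
  have h3 : a'.comp c ∣ C e * X ^ n := ⟨(X - C δ).comp c ^ m, by
    rw [← h, ha', mul_comp, pow_comp, mul_comm]⟩
  have h4 : IsUnit (a'.comp c) :=
    isUnit_of_dvd_unit (h2.dvd_of_dvd_mul_right h3) (isUnit_C.2 (.mk0 _ he))
  have h5 := natDegree_eq_zero_of_isUnit h4
  rw [natDegree_comp, mul_eq_zero, or_iff_left hc] at h5
  have hk : a = C (a'.coeff 0) * (X - C δ) ^ m := by
    conv_lhs => rw [ha', eq_C_of_natDegree_eq_zero h5, mul_comm]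
  refine ⟨a'.coeff 0, δ, ?_⟩
  have : a.natDegree = m := by
    rw [hk, natDegree_C_mul, natDegree_pow, natDegree_X_sub_C, mul_one]
    rintro h0
    rw [h0, C_0, zero_mul] at hk
    exact ha hk
  rw [this, ← hk]

section Generic

set_option linter.unusedSectionVars false

variable {F K : Type*} [Field F] [Field K] [Algebra F K] [Algebra F[X] K] [IsScalarTower F F[X] K]
  [FaithfulSMul F[X] K] {W : WeierstrassCurve F} {g : GenericPoint W K} [DecidableEq K]
  {P Q R : (W.baseChange K).toAffine.Point}

theorem IsRep.div_C {a : F[X]} {r : F} (hr : r ≠ 0) (h : IsRep P a (C r)) :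
    IsRep P (C r⁻¹ * a) 1 := by
  refine ⟨isCoprime_one_right, ?_⟩
  have h1 : (1 : F[X]) = C r⁻¹ * C r := by rw [← C_mul, inv_mul_cancel₀ hr, C_1]
  rw [h1, map_mul, map_mul, mul_assoc, mul_assoc, h.eq]

theorem IsRep.eq_or_eq_neg {a : F[X]} (hP : IsRep P a 1) (hQ : IsRep Q a 1) : P = Q ∨ P = -Q := by
  rcases P with _ | ⟨x, y, h⟩
  · exact absurd (isRep_zero_iff.1 hP).2 one_ne_zero
  rcases Q with _ | ⟨x', y', h'⟩
  · exact absurd (isRep_zero_iff.1 hQ).2 one_ne_zero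
  refine Point.X_eq_iff.1 ?_
  have h₁ := (isRep_some_iff.1 hP).2
  have h₂ := (isRep_some_iff.1 hQ).2
  rw [map_one, one_mul] at h₁ h₂
  rw [← h₁, h₂]

variable [Fintype F] [W.IsElliptic]

theorem IsRep.iterate_frob {c d : F} {m : ℕ} (h : IsRep P (C c * X ^ m + C d) 1) (n : ℕ) :
    IsRep (SupersingularFrobenius.frob^[n] P) (C c * X ^ (m * Fintype.card F ^ n) + C d) 1 := by
  obtain ⟨p, hp⟩ := CharP.exists F
  have := Fact.mk (CharP.char_is_prime F p)
  obtain ⟨k, -, hk⟩ := FiniteField.card F p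
  induction n with
  | zero => simpa using h
  | succ n ih =>
    have := ih.frob
    rw [one_pow] at this
    nth_rw 2 [hk] at this
    rw [add_pow_char_pow, mul_pow, ← C_pow, ← C_pow, ← hk, FiniteField.pow_card,
      FiniteField.pow_card, ← pow_mul, mul_assoc, ← pow_succ] at this
    rwa [Function.iterate_succ_apply']

namespace GenericPoint

theorem exists_isRep_char_zsmul_point {p : ℕ} [Fact p.Prime] [CharP F p] {n : ℕ}
    (hQ : Q ∈ g.endPoints) (h : (p : ℤ) • Q = frob^[n] g.point) :
    ∃ c d : F, c ≠ 0 ∧ IsRep ((p : ℤ) • g.point) (C c * X ^ p ^ 2 + C d) 1 := by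
  have hp : p ≠ 0 := (Fact.out : p.Prime).ne_zero
  obtain ⟨a, b, hab, hba, hht⟩ := exists_isRep_of_mem (zsmul_mem g.point_mem (p : ℤ))
  have hdeg : a.natDegree = p ^ 2 := by
    have := height_zsmul g.point_mem (p : ℤ)
    rw [height_point, hht] at this
    rw [Nat.cast_one, mul_one] at this
    exact_mod_cast this
  have ha : a ≠ 0 := by rintro rfl; simp at hba
  have hrep := g.isRep_iterate_frob n
  have hQ0 : Q ≠ 0 := by
    rintro rfl
    rw [← h, smul_zero] at hrep
    exact one_ne_zero (isRep_zero_iff.1 hrep).2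
  have hlt : b.natDegree < a.natDegree := by
    rcases eq_or_ne b 0 with rfl | hb
    · rw [natDegree_zero, hdeg]; positivity
    · exact natDegree_lt_natDegree hb hba
  have key (c d : F[X]) (hcd : IsRep Q c d) (hdc : d.degree < c.degree) : ∃ e : F, e ≠ 0 ∧
      homComp a.natDegree a c d = C e * X ^ Fintype.card F ^ n ∧
      homComp a.natDegree b c d = C e * 1 := by
    have hc : c ≠ 0 := by rintro rfl; simp at hdc
    obtain ⟨σ, hσ, hσ'⟩ := exists_algHom_of_isRep (g := g) hcd hdc hQ0
    refine IsRep.exists_unit (P := (p : ℤ) • Q) ?_ (h ▸ hrep)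
    have := hab.map hba hcd.1 (ne_zero_of_isRep hcd hc hQ0) hσ'
    rwa [map_zsmul, hσ] at this
  obtain ⟨c, hcd, hdc⟩ : ∃ c : F[X], IsRep Q c 1 ∧ (1 : F[X]).degree < c.degree := by
    obtain ⟨c, d, hcd, hdc, -⟩ := exists_isRep_of_mem hQ
    obtain ⟨e, he, -, he₂⟩ := key c d hcd hdc
    have hdu : IsUnit d := by
      have := dvd_homComp_sub a.natDegree b c d
      rw [coeff_eq_zero_of_natDegree_lt hlt, C_0, zero_mul, sub_zero, he₂, mul_one] at this
      exact isUnit_of_dvd_unit this (isUnit_C.2 (.mk0 _ he))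
    obtain ⟨δ, hδ, rfl⟩ := Polynomial.isUnit_iff.1 hdu
    refine ⟨_, hcd.div_C hδ.ne_zero, ?_⟩
    rw [degree_C_mul (inv_ne_zero hδ.ne_zero), degree_one, ← degree_C hδ.ne_zero]
    exact hdc
  have hc : c.natDegree ≠ 0 := by
    rw [degree_one] at hdc
    exact (natDegree_pos_iff_degree_pos.2 hdc).ne'
  obtain ⟨e, he, he₁, he₂⟩ := key c 1 hcd hdc
  rw [homComp_one_right le_rfl] at he₁
  rw [homComp_one_right hlt.le, mul_one] at he₂
  obtain ⟨r, rfl⟩ : ∃ r, C r = b := by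
    refine natDegree_eq_zero.1 ?_
    have := congr_arg natDegree he₂
    rw [natDegree_comp, natDegree_C, mul_eq_zero] at this
    exact this.resolve_right hc
  have hr : r ≠ 0 := by rintro rfl; rw [C_0, zero_comp] at he₂; exact C_ne_zero.2 he he₂.symm
  obtain ⟨k, δ, hk⟩ := eq_C_mul_X_sub_C_pow_of_comp_eq he hc he₁
  have hk0 : k ≠ 0 := by rintro rfl; rw [C_0, zero_mul] at hk; exact ha hk
  refine ⟨r⁻¹ * k, -(r⁻¹ * k * δ ^ p ^ 2), mul_ne_zero (inv_ne_zero hr) hk0, ?_⟩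
  have := hab.div_C hr
  rw [hk, hdeg, sub_pow_char_pow] at this
  convert this using 1
  simp only [C_neg, C_mul, C_pow]
  ring

theorem exists_isRep_char_pow_zsmul_point {p : ℕ} [Fact p.Prime] [CharP F p] {n : ℕ}
    (hQ : Q ∈ g.endPoints) (h : (p : ℤ) • Q = frob^[n] g.point) (j : ℕ) :
    ∃ c d : F, c ≠ 0 ∧ IsRep (((p : ℤ) ^ j) • g.point) (C c * X ^ (p ^ 2) ^ j + C d) 1 := by
  have hp : p ≠ 0 := (Fact.out : p.Prime).ne_zero
  have hdeg {c d : F} (hc : c ≠ 0) {m : ℕ} (hm : 0 < m) :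
      (C c * X ^ m + C d).natDegree = m := by
    rw [natDegree_add_C, natDegree_C_mul_X_pow _ _ hc]
  have hlt {c d : F} (hc : c ≠ 0) {m : ℕ} (hm : 0 < m) :
      (1 : F[X]).degree < (C c * X ^ m + C d).degree := by
    rw [degree_one]
    exact natDegree_pos_iff_degree_pos.1 (by rwa [hdeg hc hm])
  obtain ⟨k, δ, hk, H⟩ := exists_isRep_char_zsmul_point hQ h
  induction j with
  | zero => exact ⟨1, 0, one_ne_zero, by simpa using g.isRep_point⟩
  | succ j ih =>
    obtain ⟨c, d, hc, ih⟩ := ih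
    have hp0 : (p : ℤ) • g.point ≠ 0 := fun h0 ↦ by
      rw [h0] at H; exact one_ne_zero (isRep_zero_iff.1 H).2
    obtain ⟨σ, hσ, hσ'⟩ := exists_algHom_of_isRep (g := g) H (hlt hk (by positivity)) hp0
    have := ih.map (hlt hc (by positivity)) H.1 one_ne_zero hσ'
    rw [map_zsmul, hσ, homComp_one_right le_rfl, homComp_one_right (by simp), smul_smul,
      ← pow_succ] at this
    refine ⟨c * k ^ (p ^ 2) ^ j, c * δ ^ (p ^ 2) ^ j + d, mul_ne_zero hc (pow_ne_zero _ hk), ?_⟩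
    convert this using 1
    · rw [← pow_mul]
      simp only [add_comp, mul_comp, C_comp, X_pow_comp, add_pow_char_pow, mul_pow, C_add, C_mul,
        C_pow]
      ring
    · simp

theorem exists_iterate_frob_eq {p : ℕ} [Fact p.Prime] [CharP F p] {n : ℕ}
    (hQ : Q ∈ g.endPoints) (h : (p : ℤ) • Q = frob^[n] g.point) :
    ∃ N : ℕ, N ≠ 0 ∧ frob^[2 * (2 * N)] g.point = ((Fintype.card F : ℤ) ^ (2 * N)) • g.point := by
  obtain ⟨k, -, hk⟩ := FiniteField.card F p
  set q := Fintype.card F with hq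
  choose c d hc H using exists_isRep_char_pow_zsmul_point hQ h
  obtain ⟨m₁, m₂, hm, hcd⟩ : ∃ m₁ m₂ : ℕ, m₁ < m₂ ∧
      (c (k * m₁), d (k * m₁)) = (c (k * m₂), d (k * m₂)) := by
    obtain ⟨m₁, m₂, hne, h⟩ := Finite.exists_ne_map_eq_of_infinite
      fun m : ℕ ↦ (c (k * m), d (k * m))
    rcases hne.lt_or_gt with h' | h'
    · exact ⟨m₁, m₂, h', h⟩
    · exact ⟨m₂, m₁, h', h.symm⟩
  rw [Prod.mk.injEq] at hcd
  obtain ⟨N, rfl⟩ := Nat.exists_eq_add_of_lt hm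
  have hN (m : ℕ) : (p : ℤ) ^ (k * m : ℕ) = (q : ℤ) ^ m := by
    rw [pow_mul, hk]; push_cast; rfl
  have hN' (m : ℕ) : (p ^ 2) ^ (k * m : ℕ) = q ^ (2 * m) := by
    rw [hk, ← pow_mul, ← pow_mul]; ring_nf
  have H₁ := (H (k * m₁)).iterate_frob (2 * (N + 1))
  have H₂ := H (k * (m₁ + N + 1))
  rw [← hcd.1, ← hcd.2, hN, hN'] at H₂
  rw [hN, hN', ← hq, ← pow_add, iterate_map_zsmul] at H₁
  have hq0 : (q : ℤ) ^ m₁ ≠ 0 := pow_ne_zero _ (by exact_mod_cast Fintype.card_ne_zero)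
  have hiter (n : ℕ) : frob^[n] g.point ∈ g.endPoints := by
    induction n with
    | zero => exact g.point_mem
    | succ n ih => rw [Function.iterate_succ_apply']; exact frob_mem ih
  have cancel {P Q : (W.baseChange K).toAffine.Point} (hP : P ∈ g.endPoints)
      (hQ : Q ∈ g.endPoints) (h : (q : ℤ) ^ m₁ • P = (q : ℤ) ^ m₁ • Q) : P = Q :=
    sub_eq_zero.1 (eq_zero_of_zsmul_eq_zero (sub_mem hP hQ) hq0 (by rw [smul_sub, h, sub_self]))
  have hqN : (q : ℤ) ^ (m₁ + N + 1) • g.point = (q : ℤ) ^ m₁ • (q : ℤ) ^ (N + 1) • g.point := by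
    rw [smul_smul, ← pow_add, add_assoc]
  have hmem := zsmul_mem g.point_mem ((q : ℤ) ^ (N + 1))
  refine ⟨N + 1, N.succ_ne_zero, ?_⟩
  have hsq : (q : ℤ) ^ (2 * (N + 1)) = q ^ (N + 1) * q ^ (N + 1) := by rw [← pow_add, two_mul]
  rw [two_mul, Function.iterate_add_apply, hsq, ← smul_smul]
  rw [show 2 * m₁ + 2 * (N + 1) = 2 * (m₁ + N + 1) by ring] at H₁
  rcases H₁.eq_or_eq_neg H₂ with h | h
  · rw [hqN] at h
    rw [cancel (hiter _) hmem h, iterate_map_zsmul, cancel (hiter _) hmem h]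
  · rw [hqN, ← smul_neg] at h
    rw [cancel (hiter _) (neg_mem hmem) h, iterate_map_neg, iterate_map_zsmul,
      cancel (hiter _) (neg_mem hmem) h, smul_neg, neg_neg]

end GenericPoint

end Generic

section Generic

set_option linter.unusedSectionVars false

variable {F K : Type*} [Field F] [Field K] [Algebra F K] [Algebra F[X] K] [IsScalarTower F F[X] K]
  [FaithfulSMul F[X] K] {W : WeierstrassCurve F} [DecidableEq K] [Fintype F] [W.IsElliptic]

namespace GenericPoint

variable (g : GenericPoint W K)

theorem exists_iterate_frob_eq_zsmul_add_zsmul {t : ℤ}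
    (ht : (height (frob g.point - g.point) : ℤ) = Fintype.card F + 1 - t) (n : ℕ) :
    ∃ a b : ℤ, frob^[n] g.point = a • frob g.point + b • g.point ∧
      ∀ α : ℂ, α ^ 2 - t * α + Fintype.card F = 0 → α ^ n = a * α + b := by
  induction n with
  | zero => exact ⟨0, 1, by simp, by simp⟩
  | succ n ih =>
    obtain ⟨a, b, h, h'⟩ := ih
    refine ⟨a * t + b, -(Fintype.card F * a), ?_, fun α hα ↦ ?_⟩
    · rw [Function.iterate_succ_apply', h, map_add, map_zsmul, map_zsmul, g.frob_frob_eq ht,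
        smul_sub, smul_smul, smul_smul, neg_smul, add_smul, mul_comm a (Fintype.card F : ℤ)]
      abel
    · rw [pow_succ, h' α hα]
      push_cast
      linear_combination a * hα

theorem exists_pow_eq {t : ℤ}
    (ht : (height (frob g.point - g.point) : ℤ) = Fintype.card F + 1 - t)
    (hp : (ringChar F : ℤ) ∣ t) {α : ℂ} (hα : α ^ 2 - t * α + Fintype.card F = 0) :
    ∃ N : ℕ, N ≠ 0 ∧ α ^ (2 * N) = Fintype.card F ^ N := by
  have : Fact (ringChar F).Prime := ⟨CharP.char_is_prime F _⟩
  have hP := g.point_mem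
  have hF := frob_mem hP
  obtain ⟨t₁, ht₁⟩ := hp
  obtain ⟨k, -, hk⟩ := FiniteField.card F (ringChar F)
  obtain ⟨q₁, hq₁⟩ : ringChar F ∣ Fintype.card F := hk ▸ dvd_pow_self _ k.ne_zero
  have hQ := sub_mem (zsmul_mem hF t₁) (zsmul_mem hP (q₁ : ℤ))
  obtain ⟨N, hN, h⟩ := exists_iterate_frob_eq (p := ringChar F) (n := 2) hQ (by
    rw [smul_sub, smul_smul, smul_smul, ← ht₁, ← Nat.cast_mul, ← hq₁, ← g.frob_frob_eq ht]
    rfl)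
  obtain ⟨a, b, hab, H⟩ := g.exists_iterate_frob_eq_zsmul_add_zsmul ht (2 * (2 * N))
  set q := Fintype.card F
  have h0 := g.height_zsmul_frob_add_zsmul ht a (b - q ^ (2 * N))
  rw [sub_smul, ← add_sub_assoc, ← hab, h, sub_self, height_zero] at h0
  have h1 : (0 : ℂ) = a ^ 2 * q + a * (b - q ^ (2 * N)) * t + (b - q ^ (2 * N)) ^ 2 := by
    exact_mod_cast congr_arg (Int.cast (R := ℂ)) h0
  have hβ : (t - α) ^ 2 - t * (t - α) + q = 0 := by linear_combination hα
  have h2 : (α ^ (2 * (2 * N)) - q ^ (2 * N)) * ((t - α) ^ (2 * (2 * N)) - q ^ (2 * N)) = 0 := by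
    rw [H α hα, H _ hβ]
    linear_combination -h1 - a ^ 2 * hα
  have h3 : α ^ (2 * (2 * N)) * (t - α) ^ (2 * (2 * N)) = q ^ (2 * N) * q ^ (2 * N) := by
    rw [← mul_pow, ← mul_pow, ← sq, ← pow_mul', mul_comm 2 (2 * N), pow_mul' _ _ 2, pow_mul' _ _ 2]
    congr 2
    linear_combination -hα
  have hq : (q : ℂ) ^ (2 * N) ≠ 0 := pow_ne_zero _ (by exact_mod_cast Fintype.card_ne_zero)
  refine ⟨2 * N, by positivity, ?_⟩
  rcases mul_eq_zero.1 h2 with h | h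
  · exact sub_eq_zero.1 h
  · rw [sub_eq_zero.1 h] at h3
    exact mul_right_cancel₀ hq h3

end GenericPoint

end Generic

theorem addX_slope_mul_sq {K : Type*} [Field K] [DecidableEq K] (V : WeierstrassCurve.Affine K)
    {x₁ y₁ x₂ y₂ d n : K} (h₁ : V.Equation x₁ y₁) (h₂ : V.Equation x₂ y₂) (hx : x₁ ≠ x₂)
    (hd : d = y₁ + y₂ + V.a₁ * x₁ + V.a₃)
    (hn : n = x₁ ^ 2 + x₁ * x₂ + x₂ ^ 2 + V.a₂ * (x₁ + x₂) + V.a₄ - V.a₁ * y₂) :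
    V.addX x₁ x₂ (V.slope x₁ x₂ y₁ y₂) * d ^ 2 =
      n ^ 2 + V.a₁ * n * d - (V.a₂ + x₁ + x₂) * d ^ 2 := by
  rw [equation_iff] at h₁ h₂
  have hx' := sub_ne_zero.2 hx
  rw [slope_of_X_ne hx, addX]
  set l := (y₁ - y₂) / (x₁ - x₂) with hl
  have hl' : l * (x₁ - x₂) = y₁ - y₂ := div_mul_cancel₀ _ hx'
  have h : l * d = n := by
    refine mul_right_cancel₀ hx' ?_
    rw [hd, hn]
    linear_combination (y₁ + y₂ + V.a₁ * x₁ + V.a₃) * hl' + h₁ - h₂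
  linear_combination (l * d + n + V.a₁ * d) * h

section Generic

set_option linter.unusedSectionVars false

variable {F K : Type*} [Field F] [Field K] [Algebra F K] [Algebra F[X] K] [IsScalarTower F F[X] K]
  [FaithfulSMul F[X] K] {W : WeierstrassCurve F} [DecidableEq K] [Fintype F] [W.IsElliptic]
  (g : GenericPoint W K)

namespace GenericPoint

theorem mul_sq_eq_of_isRep_frob_add {L : Type*} [Field L] [Algebra F L] {x₀ y₀ : L}
    {y' : K} {η : W.toAffine.CoordinateRing} {a b : F[X]}
    (h' : (W.baseChange K).toAffine.Nonsingular (algebraMap F[X] K X) y')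
    (hη : ∀ f : W.toAffine.CoordinateRing →ₐ[F] K, (∀ a : F[X], f (algebraMap _ _ a) = algebraMap _ _ a) →
      f (CoordinateRing.mk W.toAffine X) = g.y → f η = y')
    (hab : IsRep (frob g.point + .some _ _ h') a b)
    (f : W.toAffine.CoordinateRing →ₐ[F] L) (hf : ∀ a : F[X], f (algebraMap _ _ a) = aeval x₀ a)
    (hf' : f (CoordinateRing.mk W.toAffine X) = y₀) {d n : L}
    (hd : d = y₀ ^ Fintype.card F + f η + algebraMap F L W.a₁ * x₀ ^ Fintype.card F +
      algebraMap F L W.a₃)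
    (hn : n = (x₀ ^ Fintype.card F) ^ 2 + x₀ ^ Fintype.card F * x₀ + x₀ ^ 2 +
      algebraMap F L W.a₂ * (x₀ ^ Fintype.card F + x₀) + algebraMap F L W.a₄ -
      algebraMap F L W.a₁ * f η) :
    aeval x₀ a * d ^ 2 = aeval x₀ b * (n ^ 2 + algebraMap F L W.a₁ * n * d -
      (algebraMap F L W.a₂ + x₀ ^ Fintype.card F + x₀) * d ^ 2) := by
  set q := Fintype.card F
  set x : W.toAffine.CoordinateRing := algebraMap F[X] _ X
  set y := CoordinateRing.mk W.toAffine X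
  set δ := y ^ q + η + algebraMap F W.toAffine.CoordinateRing W.a₁ * x ^ q + algebraMap F W.toAffine.CoordinateRing W.a₃ with hδ
  set ν := (x ^ q) ^ 2 + x ^ q * x + x ^ 2 + algebraMap F W.toAffine.CoordinateRing W.a₂ * (x ^ q + x) +
    algebraMap F W.toAffine.CoordinateRing W.a₄ - algebraMap F W.toAffine.CoordinateRing W.a₁ * η with hν
  have hx : f x = x₀ := (hf X).trans (aeval_X x₀)
  have key : algebraMap F[X] W.toAffine.CoordinateRing a * δ ^ 2 = algebraMap F[X] W.toAffine.CoordinateRing b *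
      (ν ^ 2 + algebraMap F W.toAffine.CoordinateRing W.a₁ * ν * δ - (algebraMap F W.toAffine.CoordinateRing W.a₂ + x ^ q + x) * δ ^ 2) := by
    obtain ⟨φ, hφ, hφ'⟩ := exists_coordinateRing_algHom W g.nonsingular.1
    have hφa (a : F[X]) : φ (algebraMap _ _ a) = algebraMap F[X] K a := by
      rw [hφ, aeval_algebraMap_apply, aeval_X_left_apply]
    refine coordinateRing_algHom_injective W transcendental_algebraMap_X φ hφ ?_
    have hη' : φ η = y' := hη φ hφa hφ'
    obtain ⟨hns, hfr⟩ : ∃ h : (W.baseChange K).toAffine.Nonsingular (algebraMap F[X] K X ^ q)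
      (g.y ^ q), frob g.point = .some _ _ h := ⟨_, rfl⟩
    have hne : algebraMap F[X] K X ^ q ≠ algebraMap F[X] K X := by
      rw [← map_pow]
      refine (FaithfulSMul.algebraMap_injective F[X] K).ne fun h ↦ ?_
      exact FiniteField.X_pow_card_sub_X_ne_zero F Fintype.one_lt_card (sub_eq_zero.2 h)
    rw [hfr, Point.add_of_X_ne hne] at hab
    have h1 := (isRep_some_iff.1 hab).2
    have h2 := addX_slope_mul_sq (W.baseChange K).toAffine (d := φ δ) (n := φ ν)
      hns.1 h'.1 hne
      (by rw [hδ]; simp only [map_add, map_mul, map_pow, y, hφ', hη', x, hφa, AlgHom.commutes]; rfl)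
      (by rw [hν]; simp only [map_add, map_sub, map_mul, map_pow, hη', x, hφa, AlgHom.commutes]
          rfl)
    rw [map_mul, map_mul, hφa, hφa, map_pow, h1, mul_assoc]
    refine congr_arg _ (h2.trans ?_)
    simp only [map_add, map_sub, map_mul, map_pow, x, hφa, AlgHom.commutes]
    rfl
  have hfδ : f δ = d := by
    rw [hδ, hd]; simp only [map_add, map_mul, map_pow, AlgHom.commutes, hx, y, hf']
  have hfν : f ν = n := by
    rw [hν, hn]; simp only [map_add, map_sub, map_mul, map_pow, AlgHom.commutes, hx]
  have := congr_arg f key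
  simpa only [map_add, map_sub, map_mul, map_pow, AlgHom.commutes, hx, hf, hfδ, hfν] using this

theorem aeval_ne_zero_of_isRep_frob_add {L : Type*} [Field L] [Algebra F L] {x₀ y₀ : L}
    (h₀ : (W.baseChange L).toAffine.Equation x₀ y₀) {a b : F[X]}
    (hab : IsRep (frob g.point + g.point) a b)
    (hd : y₀ ^ Fintype.card F + y₀ + algebraMap F L W.a₁ * x₀ ^ Fintype.card F +
      algebraMap F L W.a₃ ≠ 0) : aeval x₀ b ≠ 0 := by
  intro hb
  obtain ⟨f, hf, hf'⟩ := exists_coordinateRing_algHom W h₀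
  have := g.mul_sq_eq_of_isRep_frob_add (η := CoordinateRing.mk W.toAffine X) g.nonsingular
    (fun _ _ h ↦ h) hab f hf hf' rfl rfl
  rw [hb, zero_mul, hf'] at this
  have ha := (mul_eq_zero.1 this).resolve_right (pow_ne_zero _ hd)
  obtain ⟨r, s, h⟩ := hab.1
  have := congr_arg (aeval x₀) h
  simp [ha, hb] at this

theorem aeval_ne_zero_of_isRep_frob_sub {L : Type*} [Field L] [Algebra F L] {x₀ y₀ : L}
    (h₀ : (W.baseChange L).toAffine.Equation x₀ y₀) {a b : F[X]}
    (hab : IsRep (frob g.point - g.point) a b) (hx : x₀ ^ Fintype.card F = x₀)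
    (hy : y₀ ^ Fintype.card F ≠ y₀) : aeval x₀ b ≠ 0 := by
  intro hb
  obtain ⟨f, hf, hf'⟩ := exists_coordinateRing_algHom W h₀
  rw [sub_eq_add_neg, GenericPoint.point, Point.neg_some] at hab
  set η : W.toAffine.CoordinateRing := -CoordinateRing.mk W.toAffine X -
    algebraMap F _ W.a₁ * algebraMap F[X] _ X - algebraMap F _ W.a₃
  have := g.mul_sq_eq_of_isRep_frob_add (η := η) _ (fun φ h h' ↦ by
    simp only [η, map_sub, map_neg, map_mul, h, h', AlgHom.commutes, negY]; rfl) hab f hf hf'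
    rfl rfl
  rw [hb, zero_mul] at this
  have ha := (mul_eq_zero.1 this).resolve_right (pow_ne_zero _ (by
    simp only [η, map_sub, map_neg, map_mul, hf, hf', AlgHom.commutes, aeval_X, hx]
    rw [← sub_ne_zero] at hy
    convert hy using 1
    ring))
  obtain ⟨r, s, h⟩ := hab.1
  have := congr_arg (aeval x₀) h
  simp [ha, hb] at this

end GenericPoint

end Generic

section Count

theorem equation_iff_eq_or_eq {F : Type*} [Field F] {V : WeierstrassCurve.Affine F} {x y₀ y : F}
    (h : V.Equation x y₀) : V.Equation x y ↔ y = y₀ ∨ y = V.negY x y₀ := by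
  refine ⟨fun h' ↦ Y_eq_of_X_eq h' h rfl, ?_⟩
  rintro (rfl | rfl)
  exacts [h, (equation_neg ..).2 h]

theorem exists_equation {L : Type*} [Field L] [IsAlgClosed L] (V : WeierstrassCurve.Affine L)
    (x : L) : ∃ y, V.Equation x y := by
  obtain ⟨y, hy⟩ := IsAlgClosed.exists_root
    (C 1 * X ^ 2 + C (V.a₁ * x + V.a₃) * X + C (-(x ^ 3 + V.a₂ * x ^ 2 + V.a₄ * x + V.a₆)))
    (by rw [degree_quadratic one_ne_zero]; decide)
  refine ⟨y, (V.equation_iff _ _).2 ?_⟩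
  simp [IsRoot] at hy
  linear_combination hy

set_option linter.unusedSectionVars false

variable {F : Type*} [Field F] [Fintype F]

theorem splits_X_pow_card_sub_X : (X ^ Fintype.card F - X : F[X]).Splits := by
  rw [splits_iff_card_roots, FiniteField.roots_X_pow_card_sub_X,
    FiniteField.X_pow_card_sub_X_natDegree_eq F Fintype.one_lt_card]
  rfl

theorem exists_algebraMap_eq_of_pow_card_eq {L : Type*} [Field L] [Algebra F L] {y : L}
    (h : y ^ Fintype.card F = y) : ∃ a : F, algebraMap F L a = y :=
  splits_X_pow_card_sub_X.mem_range_of_isRoot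
    (FiniteField.X_pow_card_sub_X_ne_zero F Fintype.one_lt_card) (i := algebraMap F L) (x := y)
    (by simp [IsRoot, h])

theorem rootMultiplicity_X_pow_card_sub_X (x : F) :
    rootMultiplicity x (X ^ Fintype.card F - X : F[X]) = 1 := by
  classical
  rw [← count_roots, FiniteField.roots_X_pow_card_sub_X]
  exact Multiset.count_eq_one_of_mem Finset.univ.nodup (Finset.mem_univ x)

theorem natDegree_eq_sum_rootMultiplicity {f : F[X]} (hf : f.Splits) :
    f.natDegree = ∑ x, rootMultiplicity x f := by
  classical
  simp_rw [hf.natDegree_eq_card_roots, ← count_roots]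
  exact (Multiset.sum_count_eq_card fun a _ ↦ Finset.mem_univ a).symm

theorem card_point_eq (W : WeierstrassCurve F) [W.IsElliptic] :
    Nat.card W.toAffine.Point = ∑ x : F, Nat.card {y : F // W.toAffine.Equation x y} + 1 := by
  classical
  rw [Nat.card_congr W.toAffine.pointEquiv]
  have : Nat.card {xy : F × F // W.toAffine.Equation xy.1 xy.2} =
      ∑ x : F, Nat.card {y : F // W.toAffine.Equation x y} := by
    rw [← Nat.card_sigma]
    exact Nat.card_congr (Equiv.subtypeProdEquivSigmaSubtype fun x y ↦ W.toAffine.Equation x y)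
  rw [← this]
  exact Finite.card_option

theorem card_equation_of_eq {V : WeierstrassCurve.Affine F} {x y : F} (h : V.Equation x y)
    (hy : 2 * y + V.a₁ * x + V.a₃ = 0) : Nat.card {y : F // V.Equation x y} = 1 := by
  rw [Nat.card_eq_one_iff_exists]
  refine ⟨⟨y, h⟩, fun ⟨y', h'⟩ ↦ Subtype.ext ?_⟩
  rcases (equation_iff_eq_or_eq h).1 h' with rfl | rfl
  · rfl
  · change -y - V.a₁ * x - V.a₃ = y
    linear_combination -hy

theorem card_equation_of_ne {V : WeierstrassCurve.Affine F} {x y : F} (h : V.Equation x y)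
    (hy : 2 * y + V.a₁ * x + V.a₃ ≠ 0) : Nat.card {y : F // V.Equation x y} = 2 := by
  have hne : y ≠ V.negY x y := fun h0 ↦ hy (by rw [negY] at h0; linear_combination h0)
  have : {y' | V.Equation x y'} = {y, V.negY x y} := Set.ext fun y' ↦ equation_iff_eq_or_eq h
  change Nat.card {y' | V.Equation x y'} = 2
  rw [this, Nat.card_coe_set_eq, Set.ncard_pair hne]

end Count

section Generic

set_option linter.unusedSectionVars false

variable {F K : Type*} [Field F] [Field K] [Algebra F K] [Algebra F[X] K] [IsScalarTower F F[X] K]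
  [FaithfulSMul F[X] K] {W : WeierstrassCurve F} [DecidableEq K] [Fintype F] [W.IsElliptic]
  (g : GenericPoint W K)

namespace GenericPoint

theorem exists_sq_eq_of_isRep_frob {a b a' b' : F[X]} (h : IsRep (frob g.point - g.point) a b)
    (h' : IsRep (frob g.point + g.point) a' b') : ∃ e : F, e ≠ 0 ∧
      (X ^ Fintype.card F - X : F[X]) ^ 2 = C e * (b' * b) ∧
      ∀ x y : F, W.toAffine.Equation x y → (2 * y + W.a₁ * x + W.a₃) ^ 2 =
        e * (a'.eval x * b.eval x + b'.eval x * a.eval x) := by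
  obtain ⟨e, he, H⟩ := g.isRep_frob.addSub g.isRep_point h' h
  refine ⟨e, he, ?_, fun x y hxy ↦ ?_⟩
  · have := H 2
    simp [addSubMap] at this
    linear_combination this
  · have := congr_arg (eval x) (H 1)
    have hx : x ^ Fintype.card F = x := FiniteField.pow_card x
    simp [addSubMap, hx] at this
    rw [← this, b₂, b₄, b₆]
    rw [equation_iff] at hxy
    linear_combination 4 * hxy

theorem rootMultiplicity_eq_card {a b a' b' : F[X]} (h : IsRep (frob g.point - g.point) a b)
    (h' : IsRep (frob g.point + g.point) a' b') (x : F) :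
    rootMultiplicity x b = Nat.card {y : F // W.toAffine.Equation x y} := by
  obtain ⟨e, he, H, H'⟩ := g.exists_sq_eq_of_isRep_frob h h'
  have hX := FiniteField.X_pow_card_sub_X_ne_zero F (Fintype.one_lt_card (α := F))
  have hbb : C e * (b' * b) ≠ 0 := H ▸ pow_ne_zero 2 hX
  have hm : rootMultiplicity x b' + rootMultiplicity x b = 2 := by
    have := congr_arg (rootMultiplicity x) H
    rwa [rootMultiplicity_mul hbb, rootMultiplicity_C, zero_add,
      rootMultiplicity_mul (right_ne_zero_of_mul hbb), sq, rootMultiplicity_mul (mul_ne_zero hX hX),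
      rootMultiplicity_X_pow_card_sub_X, eq_comm] at this
  have hb := right_ne_zero_of_mul (right_ne_zero_of_mul hbb)
  have hb' := left_ne_zero_of_mul (right_ne_zero_of_mul hbb)
  by_cases hE : ∃ y, W.toAffine.Equation x y
  · obtain ⟨y, hy⟩ := hE
    by_cases hd : 2 * y + W.a₁ * x + W.a₃ = 0
    · rw [card_equation_of_eq hy hd]
      have hs := H' x y hy
      rw [hd, zero_pow two_ne_zero, eq_comm, mul_eq_zero, or_iff_right he] at hs
      have hr : 0 < rootMultiplicity x b ↔ 0 < rootMultiplicity x b' := by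
        rw [rootMultiplicity_pos hb, rootMultiplicity_pos hb', IsRoot, IsRoot]
        refine ⟨fun h0 ↦ ?_, fun h0 ↦ ?_⟩
        · rw [h0, mul_zero, zero_add, mul_eq_zero] at hs
          refine hs.resolve_right fun ha ↦ ?_
          obtain ⟨r, s, hrs⟩ := h.1
          simpa [ha, h0] using congr_arg (eval x) hrs
        · rw [h0, zero_mul, add_zero, mul_eq_zero] at hs
          refine hs.resolve_left fun ha ↦ ?_
          obtain ⟨r, s, hrs⟩ := h'.1
          simpa [ha, h0] using congr_arg (eval x) hrs
      omega
    · rw [card_equation_of_ne hy hd]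
      have := g.aeval_ne_zero_of_isRep_frob_add (L := F) (x₀ := x) (y₀ := y)
        ((W.toAffine.map_equation (algebraMap F F).injective ..).2 hy) h'
        (by rw [FiniteField.pow_card, FiniteField.pow_card]
            convert hd using 1
            simp; ring)
      have : rootMultiplicity x b' = 0 := rootMultiplicity_eq_zero this
      omega
  · have : IsEmpty {y : F // W.toAffine.Equation x y} := ⟨fun y ↦ hE ⟨y.1, y.2⟩⟩
    rw [Nat.card_of_isEmpty]
    obtain ⟨y, hy⟩ := exists_equation (W.baseChange (AlgebraicClosure F)).toAffine
      (algebraMap F _ x)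
    have := g.aeval_ne_zero_of_isRep_frob_sub hy h
      (by rw [← map_pow, FiniteField.pow_card]) (fun h0 ↦ by
        obtain ⟨y, rfl⟩ := exists_algebraMap_eq_of_pow_card_eq h0
        refine hE ⟨y, ?_⟩
        exact (W.toAffine.map_equation (algebraMap F (AlgebraicClosure F)).injective ..).1 hy)
    rw [aeval_algebraMap_apply, Ne, FaithfulSMul.algebraMap_eq_zero_iff] at this
    exact rootMultiplicity_eq_zero this

theorem height_frob_sub_point :
    height (frob g.point - g.point) = Nat.card W.toAffine.Point := by
  have hF := frob_mem g.point_mem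
  obtain ⟨a, b, h, hba, hh⟩ := exists_isRep_of_mem (sub_mem hF g.point_mem)
  obtain ⟨a', b', h', hba', hh'⟩ := exists_isRep_of_mem (add_mem hF g.point_mem)
  obtain ⟨e, he, H, -⟩ := g.exists_sq_eq_of_isRep_frob h h'
  have hX := FiniteField.X_pow_card_sub_X_ne_zero F (Fintype.one_lt_card (α := F))
  have hbb : b' * b ≠ 0 := right_ne_zero_of_mul (a := C e) (H ▸ pow_ne_zero 2 hX)
  have hb := right_ne_zero_of_mul hbb
  have hb' := left_ne_zero_of_mul hbb
  have hdeg := congr_arg natDegree H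
  rw [natDegree_C_mul he, natDegree_mul hb' hb, natDegree_pow,
    FiniteField.X_pow_card_sub_X_natDegree_eq F Fintype.one_lt_card] at hdeg
  have hsum := height_add_add_height_sub hF g.point_mem
  rw [height_frob g.point_mem, height_point, hh, hh'] at hsum
  have h₁ := natDegree_lt_natDegree hb hba
  have h₂ := natDegree_lt_natDegree hb' hba'
  have hs : b.Splits := splits_X_pow_card_sub_X.pow 2 |>.of_dvd (pow_ne_zero 2 hX)
    (H ▸ (dvd_mul_left b b').mul_left _)
  rw [card_point_eq, hh]
  simp_rw [← g.rootMultiplicity_eq_card h h']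
  rw [← natDegree_eq_sum_rootMultiplicity hs]
  omega

end GenericPoint

end Generic

theorem exists_int_pow_add_pow_eq {t q p : ℤ} (hpq : p ∣ q) {α β : ℂ} (hadd : α + β = t)
    (hmul : α * β = q) (m : ℕ) : ∃ s s' : ℤ, α ^ m + β ^ m = s ∧ α ^ (m + 1) + β ^ (m + 1) = s' ∧
      p ∣ s' - t ^ (m + 1) := by
  induction m with
  | zero => exact ⟨2, t, by norm_num, by simpa using hadd, by simp⟩
  | succ m ih =>
    obtain ⟨s, s', h, h', hd⟩ := ih
    refine ⟨s', t * s' - q * s, h', ?_, ?_⟩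
    · push_cast
      rw [← h, ← h', ← hadd, ← hmul]
      ring
    · rw [show t * s' - q * s - t ^ (m + 1 + 1) = t * (s' - t ^ (m + 1)) - q * s by ring]
      exact dvd_sub (hd.mul_left t) (hpq.mul_right s)

theorem dvd_of_pow_eq {t q p : ℤ} (hp : Prime p) (hpq : p ∣ q) {α : ℂ}
    (hα : α ^ 2 - t * α + q = 0) (hq : q ≠ 0) {n : ℕ} (hn : n ≠ 0) (h : α ^ (2 * n) = q ^ n) :
    p ∣ t := by
  have hmul : α * (t - α) = q := by linear_combination -hα
  have hqn : (q : ℂ) ^ n ≠ 0 := pow_ne_zero _ (by exact_mod_cast hq)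
  have hβ : (t - α) ^ (2 * n) = q ^ n := by
    refine mul_left_cancel₀ hqn ?_
    rw [← h, ← mul_pow, hmul, h, pow_mul, sq, mul_pow]
  obtain ⟨m, hm⟩ : ∃ m, 2 * n = m + 1 := ⟨2 * n - 1, by omega⟩
  obtain ⟨-, s, -, hs, hd⟩ := exists_int_pow_add_pow_eq hpq (by ring) hmul m
  rw [← hm, h, hβ] at hs
  have hs' : s = 2 * q ^ n := by exact_mod_cast (hs.symm.trans (two_mul _).symm)
  have : p ∣ s := hs' ▸ (dvd_pow hpq hn).mul_left 2
  exact hp.dvd_of_dvd_pow ((dvd_sub_right this).1 hd)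

end SupersingularFrobenius

/-- Let `E` be an elliptic curve over a finite field `F_q`, `t = q + 1 - #E(F_q)` the
trace of Frobenius, and `α ∈ ℂ` a root of `T² - tT + q`. Then `α/√q` is a root of
unity if and only if `E` is supersingular, i.e. `p ∣ t` where `p = char F_q`. -/
theorem frobenius_root_div_sqrt_is_root_of_unity_iff_supersingular
    {F : Type*} [Field F] [Fintype F] (W : WeierstrassCurve F) [W.IsElliptic]
    (q : ℕ) (hq : q = Fintype.card F)
    (t : ℤ) (ht : t = (q : ℤ) + 1 - Nat.card W.toAffine.Point)
    (α : ℂ) (hα : α ^ 2 - (t : ℂ) * α + (q : ℂ) = 0) :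
    (∃ n : ℕ, 0 < n ∧ (α / (Real.sqrt q : ℂ)) ^ n = 1) ↔ (ringChar F : ℤ) ∣ t := by
  have hq0 : q ≠ 0 := hq ▸ Fintype.card_ne_zero
  have hsq : (Real.sqrt q : ℂ) ^ 2 = q := by
    rw [← Complex.ofReal_pow, Real.sq_sqrt q.cast_nonneg, Complex.ofReal_natCast]
  have hroot (n : ℕ) : (α / (Real.sqrt q : ℂ)) ^ (2 * n) = 1 ↔ α ^ (2 * n) = q ^ n := by
    rw [div_pow, pow_mul (Real.sqrt q : ℂ), hsq,
      div_eq_one_iff_eq (pow_ne_zero _ (Nat.cast_ne_zero.2 hq0))]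
  constructor
  · rintro ⟨n, hn, h⟩
    obtain ⟨k, hp, hk⟩ := FiniteField.card F (ringChar F)
    refine SupersingularFrobenius.dvd_of_pow_eq (q := q) (Nat.prime_iff_prime_int.1 hp) ?_
      (by exact_mod_cast hα) (by exact_mod_cast hq0) hn.ne' ?_
    · exact_mod_cast hq ▸ hk ▸ dvd_pow_self _ k.ne_zero
    · have := (hroot n).1 (by rw [pow_mul', h, one_pow])
      exact_mod_cast this
  · intro hp
    classical
    obtain ⟨g⟩ := SupersingularFrobenius.nonempty_genericPoint W
    subst hq
    obtain ⟨N, hN, h⟩ := g.exists_pow_eq (t := t)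
      (by rw [g.height_frob_sub_point, ht]; ring) hp hα
    exact ⟨2 * N, by omega, (hroot N).2 h⟩
end

section
/- Let E/F_q be an ordinary elliptic curve, let t_{q^r} = q^r + 1 − #E(F_{q^r}), and set x_r = t_{q^r}/q^{r/2}. Then the sequence (x_r)_{r≥1} is equidistributed in [−2, 2] with respect to the measure (1/π) dz/√(4 − z²). -/
open Real Filter

namespace WeierstrassCurve.Affine

/-- The numerator of the `x`-coordinate of `(x₁, y₁) + (x₂, y₂)` over `(x₁ - x₂) ^ 2`. -/
def addXNum {R : Type*} [CommRing R] (W : Affine R) (x₁ x₂ y₁ y₂ : R) : R :=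
  (y₁ - y₂) ^ 2 + W.a₁ * (y₁ - y₂) * (x₁ - x₂) - (W.a₂ + x₁ + x₂) * (x₁ - x₂) ^ 2

lemma addXNum_mul_addXNum_negY {R : Type*} [CommRing R] {W : Affine R} {x₁ x₂ y₁ y₂ : R}
    (h₁ : W.Equation x₁ y₁) (h₂ : W.Equation x₂ y₂) :
    W.addXNum x₁ x₂ y₁ y₂ * W.addXNum x₁ x₂ y₁ (W.negY x₂ y₂) =
      ((x₁ * x₂) ^ 2 - W.b₄ * (x₁ * x₂) - W.b₆ * (x₁ + x₂) - W.b₈) * (x₁ - x₂) ^ 2 := by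
  rw [equation_iff] at h₁ h₂
  set M := x₁ * x₂ * (x₁ + x₂) + 2 * W.a₂ * x₁ * x₂ + W.a₄ * (x₁ + x₂) + 2 * W.a₆ with hM
  set Z := 2 * y₁ * y₂ + (W.a₁ * x₂ + W.a₃) * y₁ + (W.a₁ * x₁ + W.a₃) * y₂ with hZ
  have hadd : W.addXNum x₁ x₂ y₁ y₂ = M - Z := by
    rw [addXNum]; linear_combination h₁ + h₂
  have hsub : W.addXNum x₁ x₂ y₁ (W.negY x₂ y₂) =
      M + (W.a₁ * x₁ + W.a₃) * (W.a₁ * x₂ + W.a₃) + Z := by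
    rw [addXNum, negY]; linear_combination h₁ + h₂
  have hZZ : Z * (Z + (W.a₁ * x₁ + W.a₃) * (W.a₁ * x₂ + W.a₃)) =
      4 * (x₁ ^ 3 + W.a₂ * x₁ ^ 2 + W.a₄ * x₁ + W.a₆) *
        (x₂ ^ 3 + W.a₂ * x₂ ^ 2 + W.a₄ * x₂ + W.a₆) +
      (W.a₁ * x₂ + W.a₃) ^ 2 * (x₁ ^ 3 + W.a₂ * x₁ ^ 2 + W.a₄ * x₁ + W.a₆) +
      (W.a₁ * x₁ + W.a₃) ^ 2 * (x₂ ^ 3 + W.a₂ * x₂ ^ 2 + W.a₄ * x₂ + W.a₆) := by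
    rw [← h₁, ← h₂]; ring
  rw [hadd, hsub, b₄, b₆, b₈]
  linear_combination -hZZ

lemma addX_mul_sub_sq {K : Type*} [Field K] [DecidableEq K] {W : Affine K} {x₁ x₂ : K} (y₁ y₂ : K)
    (hx : x₁ ≠ x₂) :
    W.addX x₁ x₂ (W.slope x₁ x₂ y₁ y₂) * (x₁ - x₂) ^ 2 = W.addXNum x₁ x₂ y₁ y₂ := by
  have := sub_ne_zero.2 hx
  rw [addX, slope_of_X_ne hx, addXNum]
  field_simp
  ring

namespace Point

variable {K : Type*} [Field K] [DecidableEq K] {W : WeierstrassCurve.Affine K}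

/-- The map `addSubMap` sends the symmetric pair of `x`-coordinates of `P` and `Q` to that of
`P + Q` and `P - Q`. -/
lemma exists_sym2x_add_sub [W.IsElliptic] (P Q : W.Point) :
    ∃ c : K, c ≠ 0 ∧ ∀ i, (W.addSubMap i).eval (P.sym2x Q) = c * (P + Q).sym2x (P - Q) i := by
  rcases P with _ | ⟨x₁, y₁, h₁⟩
  · refine ⟨1, one_ne_zero, ?_⟩
    rw [← zero_def, zero_add, zero_sub, sym2x_neg_right]
    rcases Q with _ | ⟨x₂, y₂, h₂⟩
    · intro i; rw [← zero_def]; fin_cases i <;> simp [addSubMap]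
    · intro i; fin_cases i <;> simp [addSubMap] <;> ring
  rcases Q with _ | ⟨x₂, y₂, h₂⟩
  · refine ⟨1, one_ne_zero, ?_⟩
    rw [← zero_def, add_zero, sub_zero]
    intro i; fin_cases i <;> simp [addSubMap] <;> ring
  have e₁ := (W.equation_iff x₁ y₁).1 h₁.1
  have e₂ := (W.equation_iff x₂ y₂).1 h₂.1
  by_cases hx : x₁ = x₂
  · subst hx
    have key : ∀ y (h : W.Nonsingular x₁ y), ∃ c : K, c ≠ 0 ∧ ∀ i,
        (W.addSubMap i).eval ((some x₁ y h).sym2x (some x₁ y h)) =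
          c * (some x₁ y h + some x₁ y h).sym2x 0 i := by
      intro y h
      have e := (W.equation_iff x₁ y).1 h.1
      have hb₂ : (2 * y + W.a₁ * x₁ + W.a₃) ^ 2 =
          4 * x₁ ^ 3 + W.b₂ * x₁ ^ 2 + 2 * W.b₄ * x₁ + W.b₆ := by
        simp only [b₂, b₄, b₆]; linear_combination 4 * e
      by_cases hy : y = W.negY x₁ y
      · have hw : 2 * y + W.a₁ * x₁ + W.a₃ = 0 := by
          rw [negY] at hy; linear_combination hy
        rw [add_self_of_Y_eq hy]
        have h1 : (W.addSubMap 1).eval ((some x₁ y h).sym2x (some x₁ y h)) = 0 := by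
          simp [addSubMap]
          linear_combination (2 * y + W.a₁ * x₁ + W.a₃) * hw - hb₂
        have h2 : (W.addSubMap 2).eval ((some x₁ y h).sym2x (some x₁ y h)) = 0 := by
          simp [addSubMap]; ring
        refine ⟨(W.addSubMap 0).eval ((some x₁ y h).sym2x (some x₁ y h)), fun h0 ↦ ?_, ?_⟩
        · refine W.addSubMap_ne_zero (sym2x_ne_zero (some x₁ y h) (some x₁ y h)) ?_
          ext i; fin_cases i
          exacts [h0, h1, h2]
        · intro i; fin_cases i
          · simp
          · simpa using h1
          · simpa using h2
      · have hw : 2 * y + W.a₁ * x₁ + W.a₃ ≠ 0 := by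
          rw [negY] at hy; exact fun h ↦ hy (by linear_combination h)
        refine ⟨(2 * y + W.a₁ * x₁ + W.a₃) ^ 2, pow_ne_zero _ hw, ?_⟩
        have hl : W.slope x₁ x₁ y y * (2 * y + W.a₁ * x₁ + W.a₃) =
            3 * x₁ ^ 2 + 2 * W.a₂ * x₁ + W.a₄ - W.a₁ * y := by
          have hw' : y - W.negY x₁ y = 2 * y + W.a₁ * x₁ + W.a₃ := by rw [negY]; ring
          rw [slope_of_Y_ne rfl hy, hw', div_mul_cancel₀ _ hw]
        rw [add_self_of_Y_ne hy]
        generalize_proofs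
        generalize W.slope x₁ x₁ y y = l at *
        intro i
        fin_cases i
        · simp [addSubMap, addX]
          simp only [b₄, b₆, b₈]
          linear_combination (W.a₁ ^ 2 + 4 * W.a₂ + 8 * x₁) * e -
            (l * (2 * y + W.a₁ * x₁ + W.a₃) + (3 * x₁ ^ 2 + 2 * W.a₂ * x₁ + W.a₄ - W.a₁ * y) +
              W.a₁ * (2 * y + W.a₁ * x₁ + W.a₃)) * hl
        · simp [addSubMap]
          linear_combination -hb₂
        · simp [addSubMap]; ring
    rcases Y_eq_of_X_eq h₁.1 h₂.1 rfl with rfl | hy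
    · simpa using key y₁ h₁
    · have hQ : some x₁ y₁ h₁ = -some x₁ y₂ h₂ := by rw [neg_some]; simp [hy]
      have := key y₂ h₂
      rw [← hQ.symm, sym2x_neg_left, neg_add_cancel, ← neg_add', sym2x_neg_right, sym2x_comm 0]
      exact this
  · have hd : x₁ - x₂ ≠ 0 := sub_ne_zero.2 hx
    refine ⟨(x₁ - x₂) ^ 2, pow_ne_zero _ hd, ?_⟩
    have hadd := addX_mul_sub_sq (W := W) y₁ y₂ hx
    have hsub := addX_mul_sub_sq (W := W) y₁ (W.negY x₂ y₂) hx
    rw [sub_eq_add_neg (some _ _ _), neg_some, add_of_X_ne hx, add_of_X_ne hx]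
    intro i
    fin_cases i
    · have hmul := addXNum_mul_addXNum_negY h₁.1 h₂.1
      rw [← hadd, ← hsub] at hmul
      simp [-addX, -negY, addSubMap]
      apply mul_right_cancel₀ (pow_ne_zero 2 hd)
      linear_combination -hmul
    · simp [-addX, -negY, addSubMap]
      rw [addXNum] at hadd hsub
      rw [b₂, b₄, b₆]
      rw [negY] at hsub ⊢
      linear_combination -hadd - hsub - 2 * e₁ - 2 * e₂
    · simp [-addX, -negY, addSubMap]
      ring

end Point
end WeierstrassCurve.Affine

section
open Polynomial

namespace Polynomial
variable {R ι : Type*}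

/-- The largest degree of the entries of the vector `v` is `h`. -/
def HasHeight [Semiring R] (v : ι → R[X]) (h : ℕ) : Prop :=
  (∀ i, (v i).natDegree ≤ h) ∧ ∃ i, (v i).coeff h ≠ 0

lemma HasHeight.unique [Semiring R] {v : ι → R[X]} {h k : ℕ} (hv : HasHeight v h)
    (kv : HasHeight v k) : h = k := by
  obtain ⟨i, hi⟩ := hv.2
  obtain ⟨j, hj⟩ := kv.2
  exact le_antisymm ((le_natDegree_of_ne_zero hi).trans (kv.1 i))
    ((le_natDegree_of_ne_zero hj).trans (hv.1 j))

lemma exists_hasHeight [Semiring R] [Fintype ι] {v : ι → R[X]} {i : ι} (hi : v i ≠ 0) :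
    ∃ h, HasHeight v h := by
  obtain ⟨j, -, hj⟩ := Finset.exists_max_image Finset.univ (fun i ↦ (v i).degree)
    ⟨i, Finset.mem_univ i⟩
  refine ⟨(v j).natDegree, fun k ↦ natDegree_le_natDegree (hj k (Finset.mem_univ k)), j, ?_⟩
  rw [coeff_natDegree, leadingCoeff_ne_zero]
  intro h0
  have := hj i (Finset.mem_univ i)
  rw [h0, degree_zero, le_bot_iff, degree_eq_bot] at this
  exact hi this

lemma HasHeight.C_mul [Semiring R] [NoZeroDivisors R] {v : ι → R[X]} {h : ℕ}
    (hv : HasHeight v h) {c : R} (hc : c ≠ 0) : HasHeight (fun i ↦ C c * v i) h := by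
  refine ⟨fun i ↦ (natDegree_C_mul_le _ _).trans (hv.1 i), ?_⟩
  obtain ⟨i, hi⟩ := hv.2
  exact ⟨i, by rw [coeff_C_mul]; exact mul_ne_zero hc hi⟩

end Polynomial

/-- The symmetric product of two pairs of homogeneous coordinates. -/
def symVec {R : Type*} [CommRing R] (v w : Fin 2 → R) : Fin 3 → R :=
  ![v 0 * w 0, v 0 * w 1 + v 1 * w 0, v 1 * w 1]

lemma symVec_ne_zero {R : Type*} [CommRing R] [IsDomain R] {v w : Fin 2 → R} (hv : ∃ i, v i ≠ 0)
    (hw : ∃ i, w i ≠ 0) : symVec v w ≠ 0 := by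
  intro h
  have h0 := congr_fun h 0
  have h1 := congr_fun h 1
  have h2 := congr_fun h 2
  simp [symVec] at h0 h1 h2
  simp [Fin.exists_fin_two] at hv hw
  rcases h0 with h0 | h0 <;> rcases h2 with h2 | h2 <;> simp_all

lemma symVec_smul {R : Type*} [CommRing R] (v w : Fin 2 → R) (a b : R) (i : Fin 3) :
    symVec (fun i ↦ a * v i) (fun i ↦ b * w i) i = a * b * symVec v w i := by
  fin_cases i <;> simp [symVec] <;> ring

lemma map_symVec {R S : Type*} [CommRing R] [CommRing S] (φ : R →+* S) (v w : Fin 2 → R)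
    (i : Fin 3) : φ (symVec v w i) = symVec (fun i ↦ φ (v i)) (fun i ↦ φ (w i)) i := by
  fin_cases i <;> simp [symVec]

lemma Polynomial.HasHeight.symVec {R : Type*} [CommRing R] [IsDomain R] {v w : Fin 2 → R[X]}
    {h k : ℕ} (hv : HasHeight v h) (hw : HasHeight w k) : HasHeight (symVec v w) (h + k) := by
  have hdeg (i j) : (v i * w j).natDegree ≤ h + k := natDegree_mul_le_of_le (hv.1 i) (hw.1 j)
  have hcoeff (i j) : (v i * w j).coeff (h + k) = (v i).coeff h * (w j).coeff k :=
    coeff_mul_add_eq_of_natDegree_le (hv.1 i) (hw.1 j)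
  constructor
  · intro i
    fin_cases i
    · exact hdeg 0 0
    · exact natDegree_add_le_of_degree_le (hdeg 0 1) (hdeg 1 0)
    · exact hdeg 1 1
  · by_contra! H
    apply symVec_ne_zero hv.2 hw.2
    ext i
    have := H i
    fin_cases i <;> simpa [_root_.symVec, hcoeff] using this

lemma symVec_notMem {R : Type*} [CommRing R] {v w : Fin 2 → R} (hv : IsCoprime (v 0) (v 1))
    (hw : IsCoprime (w 0) (w 1)) (M : Ideal R) [M.IsPrime] : ∃ i, symVec v w i ∉ M := by
  have hne {u : Fin 2 → R} (hu : IsCoprime (u 0) (u 1)) :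
      ∃ i, (fun i ↦ Ideal.Quotient.mk M (u i)) i ≠ 0 := by
    by_contra! H
    have := hu.map (Ideal.Quotient.mk M)
    rw [H 0, H 1, isCoprime_zero_left] at this
    exact not_isUnit_zero this
  by_contra! H
  apply symVec_ne_zero (hne hv) (hne hw)
  ext i
  rw [← map_symVec, Pi.zero_apply, Ideal.Quotient.eq_zero_iff_mem]
  exact H i

namespace WeierstrassCurve

/-- The image of a vector under `addSubMap`. -/
noncomputable def addSubVec {R : Type*} [CommRing R] (W : WeierstrassCurve R) (x : Fin 3 → R) :
    Fin 3 → R :=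
  fun i ↦ (W.addSubMap i).eval x

lemma map_addSubVec {R S : Type*} [CommRing R] [CommRing S] (φ : R →+* S) (W : WeierstrassCurve R)
    (x : Fin 3 → R) (i : Fin 3) :
    φ (W.addSubVec x i) = (W.map φ).addSubVec (fun i ↦ φ (x i)) i := by
  fin_cases i <;> simp [addSubVec, addSubMap, map_ofNat]

lemma addSubVec_smul {R : Type*} [CommRing R] (W : WeierstrassCurve R) (a : R) (x : Fin 3 → R)
    (i : Fin 3) : W.addSubVec (fun i ↦ a * x i) i = a ^ 2 * W.addSubVec x i := by
  fin_cases i <;> simp [addSubVec, addSubMap] <;> ring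

lemma addSubVec_notMem {R : Type*} [CommRing R] (W : WeierstrassCurve R) [W.IsElliptic]
    {x : Fin 3 → R} (M : Ideal R) [M.IsPrime] (hx : ∃ i, x i ∉ M) : ∃ i, W.addSubVec x i ∉ M := by
  by_contra! H
  obtain ⟨i, hi⟩ := hx
  refine hi (Ideal.IsPrime.mem_of_pow_mem ‹_› 4 ?_)
  rw [← W.addSubMapCoeff_condition x i]
  exact Ideal.sum_mem _ fun j _ ↦ Ideal.mul_mem_left _ _ (H j)

lemma hasHeight_addSubVec {F : Type*} [Field F] (W : WeierstrassCurve F) [W.IsElliptic]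
    {x : Fin 3 → F[X]} {h : ℕ} (hx : HasHeight x h) :
    HasHeight ((W.map C).addSubVec x) (h + h) := by
  have hdeg (a : F) (i j) : (C a * (x i * x j)).natDegree ≤ h + h :=
    (natDegree_C_mul_le _ _).trans (natDegree_mul_le_of_le (hx.1 i) (hx.1 j))
  have hcoeff (i j) : (x i * x j).coeff (h + h) = (x i).coeff h * (x j).coeff h :=
    coeff_mul_add_eq_of_natDegree_le (hx.1 i) (hx.1 j)
  have h0 : (W.map C).addSubVec x 0 = C 1 * (x 0 * x 0) - C W.b₄ * (x 0 * x 2) -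
      C W.b₆ * (x 1 * x 2) - C W.b₈ * (x 2 * x 2) := by
    simp [addSubVec, addSubMap]; ring
  have h1 : (W.map C).addSubVec x 1 = C 2 * (x 1 * x 0) + C W.b₂ * (x 0 * x 2) +
      C W.b₄ * (x 1 * x 2) + C W.b₆ * (x 2 * x 2) := by
    simp [addSubVec, addSubMap, map_ofNat C]; ring
  have h2 : (W.map C).addSubVec x 2 = C 1 * (x 1 * x 1) - C 4 * (x 0 * x 2) := by
    simp [addSubVec, addSubMap, map_ofNat C]; ring
  constructor
  · intro i
    fin_cases i
    · rw [Fin.zero_eta, h0]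
      exact natDegree_sub_le_of_le (natDegree_sub_le_of_le (natDegree_sub_le_of_le (hdeg _ _ _)
        (hdeg _ _ _)) (hdeg _ _ _)) (hdeg _ _ _)|>.trans (by simp)
    · rw [Fin.mk_one, h1]
      exact natDegree_add_le_of_degree_le (natDegree_add_le_of_degree_le
        (natDegree_add_le_of_degree_le (hdeg _ _ _) (hdeg _ _ _)) (hdeg _ _ _)) (hdeg _ _ _)
    · change ((W.map C).addSubVec x 2).natDegree ≤ h + h
      rw [h2]
      exact natDegree_sub_le_of_le (hdeg _ _ _) (hdeg _ _ _)|>.trans (by simp)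
  · have hne : (fun i ↦ (x i).coeff h) ≠ 0 := fun H ↦ by
      obtain ⟨i, hi⟩ := hx.2
      exact hi (congr_fun H i)
    by_contra! H
    apply W.addSubMap_ne_zero hne
    ext i
    have := H i
    fin_cases i
    · rw [Fin.zero_eta, h0] at this
      simp only [coeff_sub, coeff_C_mul, hcoeff] at this
      simp [addSubMap]
      linear_combination this
    · rw [Fin.mk_one, h1] at this
      simp only [coeff_add, coeff_C_mul, hcoeff] at this
      simp [addSubMap]
      linear_combination this
    · change ((W.map C).addSubVec x 2).coeff (h + h) = 0 at this
      rw [h2] at this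
      simp only [coeff_sub, coeff_C_mul, hcoeff] at this
      simp [addSubMap]
      linear_combination this

end WeierstrassCurve

/-- Two vectors over a domain without common prime divisors that are proportional over a field
extension of the fraction field differ by a unit. -/
lemma exists_unit_mul_eq {ι R K : Type*} [Fintype ι] [CommRing R] [IsDomain R] [Field K]
    [Algebra R K]
    [FaithfulSMul R K] {v w : ι → R} (hv : ∀ M : Ideal R, M.IsPrime → ∃ i, v i ∉ M)
    (hw : ∀ M : Ideal R, M.IsPrime → ∃ i, w i ∉ M) {c : K}
    (h : ∀ i, algebraMap R K (v i) = c * algebraMap R K (w i)) :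
    ∃ u : Rˣ, ∀ i, v i = u * w i := by
  have hcross (i j) : v i * w j = v j * w i := by
    apply FaithfulSMul.algebraMap_injective R K
    rw [map_mul, map_mul, h, h]; ring
  have hspan {x : ι → R} (hx : ∀ M : Ideal R, M.IsPrime → ∃ i, x i ∉ M) :
      ∃ a : ι → R, ∑ i, a i * x i = 1 := by
    have : Ideal.span (Set.range x) = ⊤ := by
      by_contra H
      obtain ⟨M, hM, hle⟩ := Ideal.exists_le_maximal _ H
      obtain ⟨i, hi⟩ := hx M hM.isPrime
      exact hi (hle (Ideal.subset_span ⟨i, rfl⟩))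
    exact (Ideal.mem_span_range_iff_exists_fun).1 ((Ideal.eq_top_iff_one _).1 this)
  have hmul {x y : ι → R} (hxy : ∀ i j, x i * y j = x j * y i)
      (hy : ∀ M : Ideal R, M.IsPrime → ∃ i, y i ∉ M) : ∃ s, ∀ i, x i = s * y i := by
    obtain ⟨a, ha⟩ := hspan hy
    refine ⟨∑ j, a j * x j, fun i ↦ ?_⟩
    rw [← mul_one (x i), ← ha, Finset.mul_sum, Finset.sum_mul]
    exact Finset.sum_congr rfl fun j _ ↦ by linear_combination a j * hxy i j
  obtain ⟨s, hs⟩ := hmul hcross hw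
  obtain ⟨r, hr⟩ := hmul (x := w) (y := v) (fun i j ↦ by linear_combination -hcross i j) hv
  obtain ⟨i, hi⟩ := hw ⊥ Ideal.isPrime_bot
  have hsr : s * r = 1 := by
    apply mul_right_cancel₀ (show w i ≠ 0 from hi)
    linear_combination -hr i - r * hs i
  exact ⟨⟨s, r, hsr, by rw [mul_comm, hsr]⟩, hs⟩

end

section
open Polynomial WeierstrassCurve

/-- The coprime pair of polynomials `v` represents the `x`-coordinate of the point `P`. -/
def IsXRep {F K : Type*} [Field F] [Field K] [Algebra F[X] K] {E : Affine K} (P : E.Point)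
    (v : Fin 2 → F[X]) : Prop :=
  IsCoprime (v 0) (v 1) ∧ ∃ c : K, c ≠ 0 ∧ ∀ i, algebraMap F[X] K (v i) = c * P.xRep i

namespace IsXRep

variable {F K : Type*} [Field F] [Field K] [Algebra F[X] K]

lemma exists_hasHeight {E : Affine K} {P : E.Point} {v : Fin 2 → F[X]} (hv : IsXRep P v) :
    ∃ h, HasHeight v h := by
  have : v 0 ≠ 0 ∨ v 1 ≠ 0 := by
    by_contra! H
    have := hv.1
    rw [H.1, H.2, isCoprime_zero_left] at this
    exact not_isUnit_zero this
  rcases this with h | h <;> exact Polynomial.exists_hasHeight h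

lemma neg {E : Affine K} {P : E.Point} {v : Fin 2 → F[X]} (hv : IsXRep P v) : IsXRep (-P) v := by
  simpa [IsXRep] using hv

lemma exists_of_proportional [FaithfulSMul F[X] K] {E : Affine K} {P : E.Point} {w : Fin 2 → F[X]}
    {c : K} (hc : c ≠ 0) (hw : ∀ i, algebraMap F[X] K (w i) = c * P.xRep i) :
    ∃ v : Fin 2 → F[X], IsXRep P v := by
  classical
  have inj := FaithfulSMul.algebraMap_injective F[X] K
  have hne : ¬ (w 0 = 0 ∧ w 1 = 0) := by
    rintro ⟨h0, h1⟩
    apply P.xRep_ne_zero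
    ext i
    have := hw i
    fin_cases i <;> simpa [h0, h1, hc] using this
  set g := EuclideanDomain.gcd (w 0) (w 1) with hg
  have hg0 : g ≠ 0 := fun h ↦ hne (EuclideanDomain.gcd_eq_zero_iff.1 h)
  have hgK : algebraMap F[X] K g ≠ 0 := by simpa using inj.ne hg0
  obtain ⟨a, ha⟩ : g ∣ w 0 := EuclideanDomain.gcd_dvd_left _ _
  obtain ⟨b, hb⟩ : g ∣ w 1 := EuclideanDomain.gcd_dvd_right _ _
  refine ⟨![a, b], ⟨EuclideanDomain.gcdA (w 0) (w 1), EuclideanDomain.gcdB (w 0) (w 1), ?_⟩,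
    c / algebraMap F[X] K g, div_ne_zero hc hgK, ?_⟩
  · apply mul_left_cancel₀ hg0
    have := EuclideanDomain.gcd_eq_gcd_ab (w 0) (w 1)
    rw [← hg] at this
    simp
    linear_combination -this - EuclideanDomain.gcdA (w 0) (w 1) * ha -
      EuclideanDomain.gcdB (w 0) (w 1) * hb
  · intro i
    rw [div_mul_eq_mul_div, ← hw, eq_div_iff hgK, ← map_mul, mul_comm]
    fin_cases i
    · exact congr_arg _ ha.symm
    · exact congr_arg _ hb.symm

variable [Algebra F K] [IsScalarTower F F[X] K] {W : WeierstrassCurve F}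

lemma map_map_algebraMap (W : WeierstrassCurve F) :
    (W.map (C : F →+* F[X])).map (algebraMap F[X] K) = W.map (algebraMap F K) := by
  rw [WeierstrassCurve.map_map, IsScalarTower.algebraMap_eq F F[X] K]
  rfl

variable [DecidableEq K] [W.IsElliptic] {P Q : (W.map (algebraMap F K)).toAffine.Point}
  {v w : Fin 2 → F[X]}

lemma exists_algebraMap_addSubVec (hv : IsXRep P v) (hw : IsXRep Q w) : ∃ c : K, c ≠ 0 ∧
    ∀ i, algebraMap F[X] K ((W.map C).addSubVec (symVec v w) i) =
      c * symVec (P + Q).xRep (P - Q).xRep i := by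
  obtain ⟨c, hc, h⟩ := hv.2
  obtain ⟨d, hd, h'⟩ := hw.2
  obtain ⟨e, he, h''⟩ := P.exists_sym2x_add_sub Q
  refine ⟨(c * d) ^ 2 * e, by positivity, fun i ↦ ?_⟩
  have key : (fun i ↦ algebraMap F[X] K (symVec v w i)) =
      fun i ↦ c * d * symVec P.xRep Q.xRep i := by
    ext i
    rw [map_symVec, funext h, funext h', symVec_smul]
  rw [map_addSubVec, map_map_algebraMap, key, addSubVec_smul, mul_assoc]
  exact congr_arg _ (h'' i)

lemma exists_unit [FaithfulSMul F[X] K] (hv : IsXRep P v) (hw : IsXRep Q w) {v' w' : Fin 2 → F[X]}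
    (hv' : IsXRep (P + Q) v') (hw' : IsXRep (P - Q) w') :
    ∃ u : F[X]ˣ, ∀ i, symVec v' w' i = u * (W.map C).addSubVec (symVec v w) i := by
  obtain ⟨c, hc, h⟩ := hv'.2
  obtain ⟨d, hd, h'⟩ := hw'.2
  obtain ⟨e, he, h''⟩ := hv.exists_algebraMap_addSubVec hw
  refine exists_unit_mul_eq (K := K) (c := c * d / e) (fun M _ ↦ symVec_notMem hv'.1 hw'.1 M)
    (fun M _ ↦ addSubVec_notMem _ M (symVec_notMem hv.1 hw.1 M)) fun i ↦ ?_
  rw [h'', map_symVec, funext h, funext h', symVec_smul]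
  field_simp

lemma height_add_sub [FaithfulSMul F[X] K] (hv : IsXRep P v) (hw : IsXRep Q w)
    {v' w' : Fin 2 → F[X]} (hv' : IsXRep (P + Q) v') (hw' : IsXRep (P - Q) w') {a b a' b' : ℕ}
    (ha : HasHeight v a) (hb : HasHeight w b) (ha' : HasHeight v' a') (hb' : HasHeight w' b') :
    a' + b' = 2 * a + 2 * b := by
  obtain ⟨u, hu⟩ := hv.exists_unit hw hv' hw'
  obtain ⟨r, hr, hru⟩ := isUnit_iff.1 u.isUnit
  have h := (hasHeight_addSubVec W (ha.symVec hb)).C_mul hr.ne_zero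
  rw [hru, ← funext hu] at h
  linarith [(ha'.symVec hb').unique h]

lemma exists_add [FaithfulSMul F[X] K] (hv : IsXRep P v) (hw : IsXRep Q w) {w' : Fin 2 → F[X]}
    (hw' : IsXRep (P - Q) w') : ∃ v' : Fin 2 → F[X], IsXRep (P + Q) v' := by
  obtain ⟨d, hd, h'⟩ := hw'.2
  obtain ⟨e, he, h⟩ := hv.exists_algebraMap_addSubVec hw
  set G := (W.map C).addSubVec (symVec v w)
  have h0 := h 0
  have h1 := h 1
  have h2 := h 2
  have w0 := h' 0
  have w1 := h' 1
  rcases hm : P - Q with _ | ⟨x, y, hxy⟩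
  · refine exists_of_proportional (w := ![G 0, G 1]) he fun i ↦ ?_
    rw [hm, ← Affine.Point.zero_def] at h0 h1
    fin_cases i
    · simpa [symVec] using h0
    · simpa [symVec] using h1
  · refine exists_of_proportional (w := ![w' 1 * G 1 - w' 0 * G 2, w' 1 * G 2]) (mul_ne_zero hd he)
      fun i ↦ ?_
    rw [hm] at h1 h2 w0 w1
    simp [symVec] at h1 h2 w0 w1
    fin_cases i
    · simp [h1, h2, w0, w1]; ring
    · simp [h2, w1]; ring

end IsXRep
end

section
open Polynomial WeierstrassCurve

lemma eq_quadratic_of_second_difference {d : ℤ → ℤ} (h : ∀ n, d (n + 1) + d (n - 1) = 2 * d n + 2)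
    (n : ℤ) : d n = n ^ 2 + (d 0 + 1 - d (-1)) * n + d 0 := by
  suffices H : d n = n ^ 2 + (d 0 + 1 - d (-1)) * n + d 0 ∧
      d (n - 1) = (n - 1) ^ 2 + (d 0 + 1 - d (-1)) * (n - 1) + d 0 from H.1
  induction n with
  | zero => constructor <;> simp; ring
  | succ k ih =>
    refine ⟨?_, by simpa using ih.1⟩
    linear_combination h k + 2 * ih.1 - ih.2
  | pred k ih =>
    refine ⟨ih.2, ?_⟩
    have := h (-k - 1)
    rw [sub_add_cancel] at this
    linear_combination this + 2 * ih.2 - ih.1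

namespace IsXRep

variable {F K : Type*} [Field F] [Field K] [Algebra F[X] K] [Algebra F K] [IsScalarTower F F[X] K]
  [FaithfulSMul F[X] K] [DecidableEq K] {W : WeierstrassCurve F} [W.IsElliptic]
  {P Q : (W.map (algebraMap F K)).toAffine.Point}

lemma exists_add_zsmul {v w m : Fin 2 → F[X]} (hv : IsXRep P v) (hw : IsXRep Q w)
    (hm : IsXRep (P - Q) m) (n : ℤ) : ∃ u : Fin 2 → F[X], IsXRep (P + n • Q) u := by
  suffices H : (∃ u : Fin 2 → F[X], IsXRep (P + n • Q) u) ∧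
    ∃ u : Fin 2 → F[X], IsXRep (P + (n - 1) • Q) u from H.1
  induction n with
  | zero => exact ⟨⟨v, by simpa using hv⟩, m, by simpa [sub_eq_add_neg] using hm⟩
  | succ k ih =>
    obtain ⟨⟨a, ha⟩, b, hb⟩ := ih
    refine ⟨?_, a, by simpa using ha⟩
    rw [show P + ((k : ℤ) + 1) • Q = P + (k : ℤ) • Q + Q by rw [add_smul, one_smul]; abel]
    refine ha.exists_add hw (w' := b) ?_
    rwa [show P + (k : ℤ) • Q - Q = P + ((k : ℤ) - 1) • Q by rw [sub_smul, one_smul]; abel]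
  | pred k ih =>
    obtain ⟨⟨a, ha⟩, b, hb⟩ := ih
    refine ⟨⟨b, hb⟩, ?_⟩
    rw [show P + (-(k : ℤ) - 1 - 1) • Q = P + (-(k : ℤ) - 1) • Q + -Q by
      rw [sub_smul _ 1, one_smul]; abel]
    refine hb.exists_add hw.neg (w' := a) ?_
    rwa [show P + (-(k : ℤ) - 1) • Q - -Q = P + (-(k : ℤ)) • Q by rw [sub_smul, one_smul]; abel]

lemma height_unique {v v' : Fin 2 → F[X]} (hv : IsXRep P v) (hv' : IsXRep P v') {a b : ℕ}
    (ha : HasHeight v a) (hb : HasHeight v' b) : a = b := by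
  have h0 : IsXRep (0 : (W.map (algebraMap F K)).toAffine.Point) (![1, 0] : Fin 2 → F[X]) :=
    ⟨isCoprime_one_left, 1, one_ne_zero, fun i ↦ by fin_cases i <;> simp⟩
  have hh : HasHeight (![1, 0] : Fin 2 → F[X]) 0 :=
    ⟨fun i ↦ by fin_cases i <;> simp, 0, by simp⟩
  have := hv.height_add_sub h0 (v' := v) (w' := v) (by simpa using hv) (by simpa using hv)
    ha hh ha ha
  have := hv.height_add_sub h0 (v' := v) (w' := v') (by simpa using hv) (by simpa using hv')
    ha hh ha hb
  omega

lemma quadratic_nonneg {v w m : Fin 2 → F[X]} (hv : IsXRep P v) (hw : IsXRep Q w)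
    (hm : IsXRep (P - Q) m) {a b : ℕ} (ha : HasHeight v a) (hb : HasHeight m b)
    (hw1 : HasHeight w 1) (n : ℤ) : 0 ≤ n ^ 2 + ((a : ℤ) + 1 - b) * n + a := by
  choose u hu using hv.exists_add_zsmul hw hm
  choose d hd using fun n ↦ (hu n).exists_hasHeight
  have h0 : d 0 = a := (hu 0).height_unique (by simpa using hv) (hd 0) ha
  have h1 : d (-1) = b :=
    (hu (-1)).height_unique (by simpa [← sub_eq_add_neg] using hm) (hd (-1)) hb
  have := eq_quadratic_of_second_difference (d := fun n ↦ (d n : ℤ)) (fun n ↦ by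
    have := (hu n).height_add_sub hw (v' := u (n + 1)) (w' := u (n - 1))
      (by simpa [add_smul, add_assoc] using hu (n + 1))
      (by simpa [sub_smul, add_sub_assoc] using hu (n - 1)) (hd n) hw1 (hd _) (hd _)
    exact_mod_cast this) n
  rw [← h0, ← h1]
  exact this ▸ Int.natCast_nonneg _

end IsXRep
end

section
open Polynomial WeierstrassCurve

namespace WeierstrassCurve.Affine

section map

variable {F R S : Type*} [CommRing F] [CommRing R] [CommRing S] [Algebra F R] [Algebra F S]
  (W : WeierstrassCurve F) (φ : R →ₐ[F] S)

lemma equation_map_algHom {x y : R} (h : (W.map (algebraMap F R)).toAffine.Equation x y) :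
    (W.map (algebraMap F S)).toAffine.Equation (φ x) (φ y) := by
  have : ((W.map (algebraMap F R)).map (φ : R →+* S)).toAffine.Equation (φ x) (φ y) := h.map _
  rwa [WeierstrassCurve.map_map, φ.comp_algebraMap] at this

lemma map_addXNum (x₁ x₂ y₁ y₂ : R) :
    φ ((W.map (algebraMap F R)).toAffine.addXNum x₁ x₂ y₁ y₂) =
      (W.map (algebraMap F S)).toAffine.addXNum (φ x₁) (φ x₂) (φ y₁) (φ y₂) := by
  simp [addXNum]

lemma map_negY_algHom (x y : R) :
    φ ((W.map (algebraMap F R)).toAffine.negY x y) =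
      (W.map (algebraMap F S)).toAffine.negY (φ x) (φ y) := by
  simp [negY]

end map

namespace CoordinateRing

variable {F : Type*} [Field F] (W : WeierstrassCurve F)

local notation "R" => W.toAffine.CoordinateRing
local notation "x" => algebraMap F[X] (W.toAffine.CoordinateRing) X
local notation "y" => CoordinateRing.mk W.toAffine X

lemma equation_generic : (W.map (algebraMap F R)).toAffine.Equation x y := by
  have h := smul_basis_mul_Y (W' := W.toAffine) 0 1
  rw [equation_iff]
  simp [Algebra.smul_def] at h
  simp [IsScalarTower.algebraMap_apply F F[X] R]
  linear_combination h

lemma exists_algHom {L : Type*} [CommRing L] [Algebra F L] {a b : L}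
    (h : (W.map (algebraMap F L)).toAffine.Equation a b) :
    ∃ φ : R →ₐ[F] L, (∀ p, φ (algebraMap F[X] R p) = aeval a p) ∧ φ y = b := by
  have h0 : W.toAffine.polynomial.eval₂ (aeval a : F[X] →ₐ[F] L).toRingHom b = 0 := by
    rw [equation_iff] at h
    simp [polynomial, eval₂_add, eval₂_mul, eval₂_pow] at h ⊢
    linear_combination h
  have hof (p : F[X]) : AdjoinRoot.lift (aeval a : F[X] →ₐ[F] L).toRingHom b h0
      (algebraMap F[X] R p) = aeval a p := AdjoinRoot.lift_of h0
  refine ⟨{ AdjoinRoot.lift (aeval a : F[X] →ₐ[F] L).toRingHom b h0 with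
    commutes' := fun r ↦ ?_ }, hof, AdjoinRoot.lift_root h0⟩
  have := hof (C r)
  rw [aeval_C] at this
  exact this

variable [Fintype F]

local notation "q" => Fintype.card F

/-- The `x`-coordinate of the difference of the Frobenius image of the generic point and the
generic point is a rational function in `x`. -/
lemma exists_algebraMap_eq_addXNum : ∃ N : F[X], algebraMap F[X] R N =
    (W.map (algebraMap F R)).toAffine.addXNum (x ^ q) x (y ^ q)
      ((W.map (algebraMap F R)).toAffine.negY x y) := by
  have he := equation_generic W
  obtain ⟨σ, hσ, hσy⟩ := exists_algHom W ((equation_neg x y).2 he)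
  obtain ⟨A, D, hAD⟩ := exists_smul_basis_eq (y ^ q)
  have hfrob := map_negY_algHom W (FiniteField.frobeniusAlgHom F R) x y
  have hAD' := congr_arg σ hAD
  rw [equation_iff] at he
  simp only [Algebra.smul_def, mul_one, map_add, map_mul, map_pow, hσ, hσy, aeval_algebraMap_apply,
    FiniteField.coe_frobeniusAlgHom] at hAD hAD' hfrob
  rw [hfrob] at hAD'
  simp [negY, IsScalarTower.algebraMap_apply F F[X] R] at hAD' he
  refine ⟨(A + (C W.a₁ * X + C W.a₃)) ^ 2 +
    (D + 1) ^ 2 * (X ^ 3 + C W.a₂ * X ^ 2 + C W.a₄ * X + C W.a₆) +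
    C W.a₁ * (A + (C W.a₁ * X + C W.a₃)) * (X ^ q - X) - (C W.a₂ + X ^ q + X) * (X ^ q - X) ^ 2, ?_⟩
  simp at hAD
  simp [addXNum, negY, IsScalarTower.algebraMap_apply F F[X] R]
  rw [← hAD] at hAD' ⊢
  linear_combination -(AdjoinRoot.of W.toAffine.polynomial D + 1) ^ 2 * he -
    (AdjoinRoot.of W.toAffine.polynomial D + 1) * AdjoinRoot.root W.toAffine.polynomial * hAD'

end CoordinateRing
end WeierstrassCurve.Affine
end

section
open Polynomial WeierstrassCurve

namespace IsXRep

section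
variable {F K : Type*} [Field F] [Field K] [Algebra F[X] K] {E : Affine K}
  {x₁ x₂ y₁ y₂ : K} {h₁ : E.Nonsingular x₁ y₁} {h₂ : E.Nonsingular x₂ y₂}

lemma some_add_some_mul [DecidableEq K] {v : Fin 2 → F[X]} (hx : x₁ ≠ x₂)
    (hv : IsXRep (Affine.Point.some x₁ y₁ h₁ + Affine.Point.some x₂ y₂ h₂) v) :
    algebraMap F[X] K (v 0) * (x₁ - x₂) ^ 2 = algebraMap F[X] K (v 1) * E.addXNum x₁ x₂ y₁ y₂ := by
  obtain ⟨c, -, h⟩ := hv.2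
  rw [← E.addX_mul_sub_sq y₁ y₂ hx, h, h, Affine.Point.add_of_X_ne hx]
  simp [mul_assoc]

lemma exists_some_add_some [DecidableEq K] [FaithfulSMul F[X] K] (hx : x₁ ≠ x₂) {N D : F[X]}
    (hN : algebraMap F[X] K N = E.addXNum x₁ x₂ y₁ y₂) (hD : algebraMap F[X] K D = x₁ - x₂) :
    ∃ v : Fin 2 → F[X], IsXRep (Affine.Point.some x₁ y₁ h₁ + Affine.Point.some x₂ y₂ h₂) v := by
  refine exists_of_proportional (w := ![N, D ^ 2]) (pow_ne_zero 2 (sub_ne_zero.2 hx)) fun i ↦ ?_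
  rw [Affine.Point.add_of_X_ne hx]
  fin_cases i
  · simp [hN, ← E.addX_mul_sub_sq y₁ y₂ hx, mul_comm]
  · simp [hD]

lemma some {p : F[X]} (hp : algebraMap F[X] K p = x₁) :
    IsXRep (Affine.Point.some x₁ y₁ h₁) ![p, 1] :=
  ⟨isCoprime_one_right, 1, one_ne_zero, fun i ↦ by fin_cases i <;> simp [hp]⟩

end

end IsXRep

lemma natDegree_eq_of_mul_of_natDegree_add_le {F : Type*} [Field F] {a b c d : F[X]} {m : ℕ}
    (hb : b ≠ 0) (hd : d ≠ 0) (h0 : (a * c).natDegree = m + 2) (h2 : (b * d).natDegree = m)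
    (h1 : (a * d + b * c).natDegree ≤ m + 1) :
    a.natDegree = b.natDegree + 1 ∧ c.natDegree = d.natDegree + 1 := by
  have ha : a ≠ 0 := by rintro rfl; simp at h0
  have hc : c ≠ 0 := by rintro rfl; simp at h0
  rw [natDegree_mul ha hc] at h0
  rw [natDegree_mul hb hd] at h2
  have had := natDegree_mul ha hd
  have hbc := natDegree_mul hb hc
  rcases lt_trichotomy a.natDegree (b.natDegree + 1) with h | h | h
  · rw [natDegree_add_eq_right_of_natDegree_lt (by omega)] at h1
    omega
  · omega
  · rw [natDegree_add_eq_left_of_natDegree_lt (by omega)] at h1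
    omega

namespace WeierstrassCurve.Affine.CoordinateRing

variable {F : Type*} [Field F] [Fintype F] (W : WeierstrassCurve F) [W.IsElliptic]

local notation "R" => W.toAffine.CoordinateRing
local notation "x" => algebraMap F[X] (W.toAffine.CoordinateRing) X
local notation "y" => CoordinateRing.mk W.toAffine X
local notation "q" => Fintype.card F

lemma exists_xRep_frobenius_add_sub : ∃ U V : Fin 2 → F[X], ∃ u : F[X]ˣ,
    IsCoprime (U 0) (U 1) ∧ IsCoprime (V 0) (V 1) ∧
    (∀ i, symVec U V i = u * (W.map C).addSubVec (symVec ![X ^ q, 1] ![X, 1]) i) ∧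
    algebraMap F[X] R (U 0 * (X ^ q - X) ^ 2) = algebraMap F[X] R (U 1) *
      (W.map (algebraMap F R)).toAffine.addXNum (x ^ q) x (y ^ q) y ∧
    algebraMap F[X] R (V 0 * (X ^ q - X) ^ 2) = algebraMap F[X] R (V 1) *
      (W.map (algebraMap F R)).toAffine.addXNum (x ^ q) x (y ^ q)
        ((W.map (algebraMap F R)).toAffine.negY x y) ∧
    ∀ h, HasHeight V h → ∀ n : ℤ, 0 ≤ n ^ 2 + ((q : ℤ) + 1 - h) * n + q := by
  classical
  let K := W.toAffine.FunctionField
  let ι : R →ₐ[F] K := IsScalarTower.toAlgHom F R K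
  have hιinj : Function.Injective ι := FaithfulSMul.algebraMap_injective R K
  have hι (p : F[X]) : ι (algebraMap F[X] R p) = algebraMap F[X] K p :=
    (IsScalarTower.algebraMap_apply F[X] R K p).symm
  have hgen := equation_generic W
  have hQ : (W.map (algebraMap F K)).toAffine.Nonsingular (ι x) (ι y) :=
    equation_iff_nonsingular.1 (equation_map_algHom W ι hgen)
  have hP : (W.map (algebraMap F K)).toAffine.Nonsingular (ι (x ^ q)) (ι (y ^ q)) :=
    equation_iff_nonsingular.1 (equation_map_algHom W ι
      (equation_map_algHom W (FiniteField.frobeniusAlgHom F R) hgen))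
  have hX : (X ^ q - X : F[X]) ≠ 0 := FiniteField.X_pow_card_sub_X_ne_zero F Fintype.one_lt_card
  have hD : algebraMap F[X] K (X ^ q - X) = ι (x ^ q) - ι x := by
    rw [← hι, map_sub, map_sub, map_pow]
  have hne : ι (x ^ q) ≠ ι x := by
    rw [← sub_ne_zero, ← hD]
    simpa using (FaithfulSMul.algebraMap_injective F[X] K).ne hX
  have hv : IsXRep (Point.some _ _ hP) (![X ^ q, 1] : Fin 2 → F[X]) :=
    .some (by rw [← hι, map_pow])
  have hw : IsXRep (Point.some _ _ hQ) (![X, 1] : Fin 2 → F[X]) := .some (hι _).symm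
  obtain ⟨N, hN⟩ := exists_algebraMap_eq_addXNum W
  obtain ⟨V, hV⟩ : ∃ V : Fin 2 → F[X], IsXRep (Point.some _ _ hP - Point.some _ _ hQ) V := by
    rw [sub_eq_add_neg, Point.neg_some]
    refine IsXRep.exists_some_add_some hne (N := N) ?_ hD
    rw [← hι, hN, map_addXNum, map_negY_algHom]
  obtain ⟨U, hU⟩ := hv.exists_add hw hV
  obtain ⟨u, hu⟩ := hv.exists_unit hw hU hV
  refine ⟨U, V, u, hU.1, hV.1, hu, hιinj ?_, hιinj ?_, fun h hh n ↦ ?_⟩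
  · rw [map_mul ι, hι, hι, map_addXNum, ← hU.some_add_some_mul hne, map_mul, map_pow, hD]
  · rw [sub_eq_add_neg, Point.neg_some] at hV
    rw [map_mul ι, hι, hι, map_addXNum, map_negY_algHom, ← hV.some_add_some_mul hne, map_mul,
      map_pow, hD]
  · refine hv.quadratic_nonneg hw hV ⟨fun i ↦ ?_, 0, ?_⟩ hh ⟨fun i ↦ ?_, 0, ?_⟩ n
    · fin_cases i <;> simp
    · simp
    · fin_cases i <;> simp
    · simp

end WeierstrassCurve.Affine.CoordinateRing
end

section
open Polynomial WeierstrassCurve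

lemma Polynomial.natDegree_eq_sum_rootMultiplicity {F : Type*} [Field F] [Fintype F] {p : F[X]}
    (hp : p.Splits) : p.natDegree = ∑ a, p.rootMultiplicity a := by
  classical
  rw [hp.natDegree_eq_card_roots, ← Multiset.sum_count_eq_card (s := Finset.univ) fun a _ ↦
    Finset.mem_univ a]
  simp

lemma FiniteField.rootMultiplicity_X_pow_card_sub_X {F : Type*} [Field F] [Fintype F] (a : F) :
    (X ^ Fintype.card F - X : F[X]).rootMultiplicity a = 1 := by
  classical
  rw [← count_roots, FiniteField.roots_X_pow_card_sub_X]
  exact Multiset.count_eq_one_of_mem (Finset.nodup _) (Finset.mem_univ a)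

lemma FiniteField.splits_X_pow_card_sub_X' (F : Type*) [Field F] [Fintype F] :
    (X ^ Fintype.card F - X : F[X]).Splits := by
  rw [splits_iff_card_roots, FiniteField.roots_X_pow_card_sub_X,
    FiniteField.X_pow_card_sub_X_natDegree_eq F Fintype.one_lt_card]
  exact Finset.card_univ

lemma FiniteField.exists_algebraMap_eq {F L : Type*} [Field F] [Fintype F] [Field L] [Algebra F L]
    {b : L} (hb : b ^ Fintype.card F = b) : ∃ c : F, algebraMap F L c = b := by
  have hF : (X ^ Fintype.card F - X : F[X]) ≠ 0 :=
    FiniteField.X_pow_card_sub_X_ne_zero F Fintype.one_lt_card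
  exact (splits_X_pow_card_sub_X' F).mem_range_of_isRoot hF (x := b) (by simp [hb])

namespace WeierstrassCurve.Affine

lemma card_point_eq {F : Type*} [Field F] [Fintype F] (W : WeierstrassCurve F) [W.IsElliptic] :
    Nat.card W.toAffine.Point = 1 + ∑ a, Nat.card {b // W.toAffine.Equation a b} := by
  rw [Nat.card_congr (pointEquiv W.toAffine), WithZero, Finite.card_option, add_comm,
    ← Nat.card_sigma]
  congr 1
  exact Nat.card_congr ⟨fun p ↦ ⟨p.1.1, p.1.2, p.2⟩, fun p ↦ ⟨⟨p.1, p.2.1⟩, p.2.2⟩,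
    fun _ ↦ rfl, fun _ ↦ rfl⟩

lemma exists_equation {L : Type*} [Field L] [IsAlgClosed L] (W : Affine L) (a : L) :
    ∃ b, W.Equation a b := by
  obtain ⟨b, hb⟩ := IsAlgClosed.exists_root
    (X ^ 2 + C (W.a₁ * a + W.a₃) * X - C (a ^ 3 + W.a₂ * a ^ 2 + W.a₄ * a + W.a₆))
    (by
      have : (X ^ 2 + C (W.a₁ * a + W.a₃) * X -
        C (a ^ 3 + W.a₂ * a ^ 2 + W.a₄ * a + W.a₆)).degree = 2 := by compute_degree!
      rw [this]
      norm_num)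
  refine ⟨b, (equation_iff ..).2 ?_⟩
  rw [IsRoot.def] at hb
  simp at hb
  linear_combination hb

namespace CoordinateRing

variable {F : Type*} [Field F] [Fintype F] (W : WeierstrassCurve F)

local notation "R" => W.toAffine.CoordinateRing
local notation "x" => algebraMap F[X] (W.toAffine.CoordinateRing) X
local notation "y" => CoordinateRing.mk W.toAffine X
local notation "q" => Fintype.card F

variable {W} in
lemma eval_mul_eval_eq {A B D : F[X]} {u : F[X]ˣ} (hB : B ≠ 0)
    (hBD : B * D = (u : F[X]) * (X ^ q - X) ^ 2)
    {y' : R} (h : algebraMap F[X] R (A * (X ^ q - X) ^ 2) = algebraMap F[X] R B *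
      (W.map (algebraMap F R)).toAffine.addXNum (x ^ q) x (y ^ q) y') {L : Type*} [Field L]
    [Algebra F L] (a : F) (φ : R →ₐ[F] L)
    (hφ : ∀ p, φ (algebraMap F[X] R p) = aeval (algebraMap F L a) p) :
    algebraMap F L (A.eval a * D.eval a) =
      algebraMap F L ((u : F[X]).eval a) * (φ y ^ q - φ y') ^ 2 := by
  have hB' : algebraMap F[X] R B ≠ 0 := by
    simpa using (FaithfulSMul.algebraMap_injective F[X] R).ne hB
  have key : algebraMap F[X] R (A * D) = algebraMap F[X] R u *
      (W.map (algebraMap F R)).toAffine.addXNum (x ^ q) x (y ^ q) y' := by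
    apply mul_left_cancel₀ hB'
    rw [mul_left_comm, ← h, ← map_mul, ← map_mul]
    congr 1
    linear_combination A * hBD
  have := congr_arg φ key
  rw [map_mul φ, map_addXNum, hφ, hφ, map_pow, map_pow, hφ, aeval_X, ← map_pow (algebraMap F L),
    FiniteField.pow_card, aeval_algebraMap_apply, aeval_algebraMap_apply] at this
  simpa [addXNum] using this

lemma card_equation_eq_of_rootMultiplicity {U V : Fin 2 → F[X]} {u : F[X]ˣ}
    (hU : IsCoprime (U 0) (U 1)) (hV : IsCoprime (V 0) (V 1))
    (hUV : U 1 * V 1 = (u : F[X]) * (X ^ q - X) ^ 2)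
    (hN₁ : algebraMap F[X] R (U 0 * (X ^ q - X) ^ 2) = algebraMap F[X] R (U 1) *
      (W.map (algebraMap F R)).toAffine.addXNum (x ^ q) x (y ^ q) y)
    (hN₂ : algebraMap F[X] R (V 0 * (X ^ q - X) ^ 2) = algebraMap F[X] R (V 1) *
      (W.map (algebraMap F R)).toAffine.addXNum (x ^ q) x (y ^ q)
        ((W.map (algebraMap F R)).toAffine.negY x y)) (a : F) :
    (V 1).rootMultiplicity a = Nat.card {b // W.toAffine.Equation a b} := by
  have hX : (X ^ q - X : F[X]) ≠ 0 := FiniteField.X_pow_card_sub_X_ne_zero F Fintype.one_lt_card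
  have hne : U 1 * V 1 ≠ 0 := hUV ▸ mul_ne_zero u.ne_zero (pow_ne_zero 2 hX)
  have hU1 := left_ne_zero_of_mul hne
  have hV1 := right_ne_zero_of_mul hne
  have hu : (u : F[X]).eval a ≠ 0 := (u.isUnit.map (evalRingHom a)).ne_zero
  have hmult : (U 1).rootMultiplicity a + (V 1).rootMultiplicity a = 2 := by
    have hu0 : (u : F[X]).rootMultiplicity a = 0 := rootMultiplicity_eq_zero hu
    rw [← rootMultiplicity_mul hne, hUV, rootMultiplicity_mul (hUV ▸ hne), hu0, sq,
      rootMultiplicity_mul (mul_ne_zero hX hX), FiniteField.rootMultiplicity_X_pow_card_sub_X]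
  have hcop (h1 : (U 1).eval a = 0) : (U 0).eval a ≠ 0 := fun h0 ↦ by
    simpa [h0, h1] using hU.map (evalRingHom a)
  have hcop' (h1 : (V 1).eval a = 0) : (V 0).eval a ≠ 0 := fun h0 ↦ by
    simpa [h0, h1] using hV.map (evalRingHom a)
  by_cases hex : ∃ b, W.toAffine.Equation a b
  · obtain ⟨b, hb⟩ := hex
    have hset : {b' | W.toAffine.Equation a b'} = {b, W.toAffine.negY a b} := by
      ext b'
      refine ⟨fun h ↦ Y_eq_of_X_eq h hb rfl, ?_⟩
      rintro (rfl | rfl)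
      exacts [hb, (equation_neg ..).2 hb]
    have hcard : Nat.card {b' // W.toAffine.Equation a b'} =
        ({b, W.toAffine.negY a b} : Set F).ncard := hset ▸ rfl
    obtain ⟨φ, hφ, hφy⟩ := exists_algHom W (L := F) (a := a) (b := b) (by simpa using hb)
    have h₁ := eval_mul_eval_eq hU1 hUV hN₁ a φ hφ
    have h₂ := eval_mul_eval_eq hV1 (by rw [mul_comm, hUV]) hN₂ a φ hφ
    rw [map_negY_algHom, hφy, hφ, FiniteField.pow_card, aeval_X] at h₂
    rw [hφy, FiniteField.pow_card, sub_self] at h₁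
    change _ = _ * (b - W.toAffine.negY a b) ^ 2 at h₂
    rw [hcard]
    by_cases hby : b = W.toAffine.negY a b
    · rw [← hby, Set.pair_eq_singleton, Set.ncard_singleton]
      rw [← hby] at h₂
      simp at h₁ h₂
      have hroot : (U 1).eval a * (V 1).eval a = 0 := by
        rw [← eval_mul, hUV]
        simp [FiniteField.pow_card]
      have hboth : (U 1).eval a = 0 ∧ (V 1).eval a = 0 := by
        rcases mul_eq_zero.1 hroot with h | h
        · exact ⟨h, h₁.resolve_left (hcop h)⟩
        · exact ⟨h₂.resolve_left (hcop' h), h⟩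
      have := (rootMultiplicity_pos hU1).2 hboth.1
      have := (rootMultiplicity_pos hV1).2 hboth.2
      omega
    · rw [Set.ncard_pair hby]
      have : (U 1).eval a ≠ 0 := by
        intro h
        rw [h, mul_zero, map_zero, eq_comm, mul_eq_zero] at h₂
        exact h₂.elim hu (pow_ne_zero 2 (sub_ne_zero.2 hby))
      rw [rootMultiplicity_eq_zero this] at hmult
      omega
  · have : IsEmpty {b // W.toAffine.Equation a b} := ⟨fun b ↦ hex ⟨b.1, b.2⟩⟩
    rw [Nat.card_of_isEmpty]
    apply rootMultiplicity_eq_zero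
    obtain ⟨b, hb⟩ := exists_equation (L := AlgebraicClosure F)
      (W.map (algebraMap F (AlgebraicClosure F))) (algebraMap _ _ a)
    obtain ⟨φ, hφ, hφy⟩ := exists_algHom W hb
    have h₁ := eval_mul_eval_eq hU1 hUV hN₁ a φ hφ
    intro h
    rw [IsRoot.def.1 h, mul_zero, map_zero, hφy, eq_comm, mul_eq_zero, map_eq_zero] at h₁
    have hbq := sub_eq_zero.1 (pow_eq_zero_iff two_ne_zero |>.1 (h₁.resolve_left hu))
    obtain ⟨c, rfl⟩ := FiniteField.exists_algebraMap_eq hbq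
    exact hex ⟨c, (map_equation W.toAffine (algebraMap F (AlgebraicClosure F)).injective a c).1 hb⟩

variable [W.IsElliptic]

/-- A Hasse-type quadratic form and a trivial upper bound for the number of points. -/
lemma card_point_bounds : Nat.card W.toAffine.Point ≤ 2 * q + 1 ∧
    ∀ n : ℤ, 0 ≤ n ^ 2 + ((q : ℤ) + 1 - Nat.card W.toAffine.Point) * n + q := by
  obtain ⟨U, V, u, hU, hV, hUV, hN₁, hN₂, hquad⟩ := exists_xRep_frobenius_add_sub W
  have h0 := hUV 0
  have h1 := hUV 1
  have h2 := hUV 2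
  simp [symVec, addSubVec, addSubMap] at h0 h1 h2
  have hq : 1 < q := Fintype.one_lt_card
  have h2' : U 1 * V 1 = (u : F[X]) * (X ^ q - X) ^ 2 := by rw [h2]; ring
  have hX : (X ^ q - X : F[X]) ≠ 0 := FiniteField.X_pow_card_sub_X_ne_zero F hq
  have hne : U 1 * V 1 ≠ 0 := h2' ▸ mul_ne_zero u.ne_zero (pow_ne_zero 2 hX)
  obtain ⟨r, hr, hru⟩ := isUnit_iff.1 u.isUnit
  have hdeg2 : (U 1 * V 1).natDegree = 2 * q := by
    rw [h2', ← hru, natDegree_C_mul hr.ne_zero, natDegree_pow,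
      FiniteField.X_pow_card_sub_X_natDegree_eq F hq]
  have hdeg0 : (U 0 * V 0).natDegree = 2 * q + 2 := by
    rw [h0, ← hru, natDegree_C_mul hr.ne_zero]
    have hlow : (C W.b₄ * X ^ (q + 1) + C W.b₆ * (X ^ q + X) + C W.b₈).natDegree ≤ 2 * q + 1 := by
      compute_degree
      simp
      omega
    rw [show ((X ^ q * X) ^ 2 - C W.b₄ * (X ^ q * X) - C W.b₆ * (X ^ q + X) - C W.b₈ : F[X]) =
      X ^ (2 * q + 2) - (C W.b₄ * X ^ (q + 1) + C W.b₆ * (X ^ q + X) + C W.b₈) by ring,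
      natDegree_sub_eq_left_of_natDegree_lt (by rw [natDegree_X_pow]; omega), natDegree_X_pow]
  have hdeg1 : (U 0 * V 1 + U 1 * V 0).natDegree ≤ 2 * q + 1 := by
    rw [h1, ← hru]
    refine (natDegree_C_mul_le _ _).trans ?_
    compute_degree
    omega
  obtain ⟨-, hVdeg⟩ := natDegree_eq_of_mul_of_natDegree_add_le (left_ne_zero_of_mul hne)
    (right_ne_zero_of_mul hne) hdeg0 hdeg2 hdeg1
  have hsplit : (V 1).Splits := by
    have : (U 1 * V 1).Splits := by
      rw [h2', ← hru]
      exact (Splits.C r).mul ((FiniteField.splits_X_pow_card_sub_X' F).pow 2)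
    exact this.of_dvd hne (dvd_mul_left _ _)
  have hcard : Nat.card W.toAffine.Point = (V 0).natDegree := by
    rw [card_point_eq, hVdeg, natDegree_eq_sum_rootMultiplicity hsplit, add_comm]
    congr 1
    exact Finset.sum_congr rfl fun a _ ↦
      (card_equation_eq_of_rootMultiplicity W hU hV h2' hN₁ hN₂ a).symm
  have hheight : HasHeight V (V 0).natDegree := by
    refine ⟨fun i ↦ ?_, 0, ?_⟩
    · fin_cases i
      · exact le_rfl
      · exact hVdeg ▸ Nat.le_succ _
    · rw [coeff_natDegree, leadingCoeff_ne_zero]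
      intro h
      simp [h] at hVdeg
  refine ⟨?_, hcard ▸ hquad _ hheight⟩
  rw [natDegree_mul (left_ne_zero_of_mul hne) (right_ne_zero_of_mul hne)] at hdeg2
  omega

end CoordinateRing
end WeierstrassCurve.Affine
end

section

lemma sq_le_of_forall_quadratic_nonneg {t q : ℤ} (h : ∀ n : ℤ, 0 ≤ n ^ 2 + t * n + q) :
    t ^ 2 ≤ 4 * q ∨ ∃ s, t = 2 * s + 1 ∧ q = s * (s + 1) := by
  obtain ⟨s, rfl | rfl⟩ := Int.even_or_odd' t
  · left
    linarith [h (-s), show (-s) ^ 2 + 2 * s * (-s) + q = q - s ^ 2 by ring,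
      show (2 * s) ^ 2 = 4 * s ^ 2 by ring]
  · have := h (-s)
    rcases eq_or_lt_of_le (show s * (s + 1) ≤ q by linarith) with h' | h'
    · exact .inr ⟨s, rfl, h'.symm⟩
    · exact .inl (by nlinarith)

lemma prime_pow_eq_mul_succ {p k : ℕ} (hp : p.Prime) (hk : k ≠ 0) {s : ℤ}
    (h : ((p ^ k : ℕ) : ℤ) = s * (s + 1)) : s = 1 ∨ s = -2 := by
  have hp' : Prime (p : ℤ) := Nat.prime_iff_prime_int.1 hp
  have hpos : (0 : ℤ) < p ^ k := by exact_mod_cast pow_pos hp.pos k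
  push_cast at h
  have hunit {a b : ℤ} (hab : IsCoprime a b) (hpk : (p : ℤ) ^ k = a * b) (hpa : (p : ℤ) ∣ a) :
      b = 1 ∨ b = -1 := by
    rw [← Int.isUnit_iff]
    refine IsCoprime.isUnit_of_dvd' (((hp'.coprime_iff_not_dvd).2 fun hpb ↦ ?_).pow_left (m := k))
      (hpk ▸ dvd_mul_left b a) dvd_rfl
    exact hp'.not_isUnit (hab.isUnit_of_dvd' hpa hpb)
  have hcop : IsCoprime s (s + 1) := ⟨-1, 1, by ring⟩
  rcases hp'.dvd_or_dvd (h ▸ dvd_pow_self (p : ℤ) hk) with hd | hd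
  · rcases hunit hcop h hd with h1 | h1
    · rw [h1] at h; nlinarith
    · omega
  · rcases hunit hcop.symm (by rw [h, mul_comm]) hd with h1 | h1
    · omega
    · rw [h1] at h; nlinarith

open WeierstrassCurve in
lemma sq_trace_lt {F : Type*} [Field F] [Fintype F] (W : WeierstrassCurve F) [W.IsElliptic] {t : ℤ}
    (ht : t = (Fintype.card F : ℤ) + 1 - Nat.card W.toAffine.Point)
    (hord : ¬ (ringChar F : ℤ) ∣ t) : t ^ 2 < 4 * Fintype.card F := by
  have hp := CharP.char_is_prime F (ringChar F)
  obtain ⟨k, -, hk⟩ := FiniteField.card F (ringChar F)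
  obtain ⟨hle, hquad⟩ := Affine.CoordinateRing.card_point_bounds W
  have hpos : 0 < Nat.card W.toAffine.Point := by
    rw [Affine.card_point_eq]; omega
  rw [← ht] at hquad
  rcases sq_le_of_forall_quadratic_nonneg hquad with h | ⟨s, hs, hq⟩
  · refine lt_of_le_of_ne h fun heq ↦ hord ?_
    refine (Nat.prime_iff_prime_int.1 hp).dvd_of_dvd_pow (n := 2) ?_
    rw [heq, hk]
    push_cast
    exact dvd_mul_of_dvd_right (dvd_pow_self _ k.ne_zero) _
  · have := hq
    rw [hk] at this
    rcases prime_pow_eq_mul_succ hp k.ne_zero this with rfl | rfl <;> omega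

end

section

open Polynomial Polynomial.Chebyshev MeasureTheory

lemma tendsto_average_pow_of_norm_eq_one {w : ℂ} (hw : ‖w‖ = 1) (hw1 : w ≠ 1) :
    Tendsto (fun n : ℕ ↦ (1 / (n : ℂ)) * ∑ r ∈ Finset.Icc 1 n, w ^ r) atTop (nhds 0) := by
  have hw1' : w - 1 ≠ 0 := sub_ne_zero.2 hw1
  refine squeeze_zero_norm (a := fun n : ℕ ↦ (2 / ‖w - 1‖) / n) (fun n ↦ ?_)
    (tendsto_const_div_atTop_nhds_zero_nat _)
  have hsum : ∑ r ∈ Finset.Icc 1 n, w ^ r = w * ((w ^ n - 1) / (w - 1)) := by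
    rw [← geom_sum_eq hw1, Finset.mul_sum, Finset.range_eq_Ico, ← Finset.Ico_succ_right_eq_Icc,
      Finset.sum_Ico_eq_sum_range, Finset.range_eq_Ico]
    refine Finset.sum_congr (by simp) fun r _ ↦ ?_
    rw [pow_add, pow_one]
  rw [hsum, norm_mul, norm_mul, hw, norm_div, norm_div, one_mul, norm_one, Complex.norm_natCast,
    one_div, mul_comm, ← div_eq_mul_inv]
  gcongr
  calc ‖w ^ n - 1‖ ≤ ‖w ^ n‖ + ‖(1 : ℂ)‖ := norm_sub_le _ _
    _ = 2 := by rw [norm_pow, hw]; norm_num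

lemma tendsto_average_cos_mul {φ : ℝ} (hφ : Complex.exp (φ * Complex.I) ≠ 1) :
    Tendsto (fun n : ℕ ↦ (1 / (n : ℝ)) * ∑ r ∈ Finset.Icc 1 n, cos (r * φ)) atTop (nhds 0) := by
  have h := (Complex.continuous_re.tendsto _).comp
    (tendsto_average_pow_of_norm_eq_one (Complex.norm_exp_ofReal_mul_I φ) hφ)
  refine h.congr fun n ↦ ?_
  have : ∀ r : ℕ, Complex.exp (φ * Complex.I) ^ r = Complex.exp (((r * φ : ℝ) : ℂ) * Complex.I) :=
    fun r ↦ by rw [← Complex.exp_nat_mul]; push_cast; ring_nf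
  have h2 : (1 / (n : ℂ)) = ((1 / (n : ℝ) : ℝ) : ℂ) := by push_cast; rfl
  simp only [Function.comp, h2, Complex.re_ofReal_mul, Complex.re_sum, this,
    Complex.exp_ofReal_mul_I_re]

lemma mem_span_range_chebyshevT (p : ℝ[X]) : p ∈ Submodule.span ℝ (Set.range (T ℝ)) := by
  have hX : ∀ s ∈ Submodule.span ℝ (Set.range (T ℝ)),
      X * s ∈ Submodule.span ℝ (Set.range (T ℝ)) := by
    intro s hs
    induction hs using Submodule.span_induction with
    | mem s hs =>
      obtain ⟨k, rfl⟩ := hs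
      have : X * T ℝ k = (1 / 2 : ℝ) • (T ℝ (k + 1) + T ℝ (k - 1)) := by
        rw [T_add_one, sub_add_cancel, mul_assoc, ← C_ofNat, ← smul_eq_C_mul, smul_smul]
        norm_num
      rw [this]
      exact Submodule.smul_mem _ _ (Submodule.add_mem _ (Submodule.subset_span ⟨_, rfl⟩)
        (Submodule.subset_span ⟨_, rfl⟩))
    | zero => simp
    | add a b _ _ ha hb => rw [mul_add]; exact Submodule.add_mem _ ha hb
    | smul c a _ ha => rw [mul_smul_comm]; exact Submodule.smul_mem _ _ ha
  have hpow : ∀ n : ℕ, (X : ℝ[X]) ^ n ∈ Submodule.span ℝ (Set.range (T ℝ)) := by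
    intro n
    induction n with
    | zero => exact Submodule.subset_span ⟨0, by simp⟩
    | succ n ih => rw [pow_succ']; exact hX _ ih
  rw [p.as_sum_range_C_mul_X_pow]
  refine Submodule.sum_mem _ fun i _ ↦ ?_
  rw [← smul_eq_C_mul]
  exact Submodule.smul_mem _ _ (hpow i)

lemma tendsto_average_eval_cos {θ : ℝ}
    (hθ : ∀ k : ℤ, k ≠ 0 → Complex.exp ((k * θ : ℝ) * Complex.I) ≠ 1) (p : ℝ[X]) :
    Tendsto (fun n : ℕ ↦ (1 / (n : ℝ)) * ∑ r ∈ Finset.Icc 1 n, p.eval (cos (r * θ))) atTop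
      (nhds (π⁻¹ * ∫ u, p.eval u ∂measureT)) := by
  have hpi : ∀ p : ℝ[X], Integrable (fun u ↦ p.eval u) measureT :=
    fun p ↦ integrable_measureT p.continuous.continuousOn
  induction mem_span_range_chebyshevT p using Submodule.span_induction with
  | mem s hs =>
    obtain ⟨k, rfl⟩ := hs
    rcases eq_or_ne k 0 with rfl | hk
    · rw [integral_eval_T_real_measureT_zero, inv_mul_cancel₀ pi_ne_zero]
      refine tendsto_const_nhds.congr' ?_
      filter_upwards [eventually_ne_atTop 0] with n hn
      simp [hn]
    · rw [integral_eval_T_real_measureT_of_ne_zero hk, mul_zero]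
      refine (tendsto_average_cos_mul (hθ k hk)).congr fun n ↦ ?_
      simp only [T_real_cos]
      congr! 3
      ring
  | zero => simp
  | add a b _ _ ha hb =>
    simp only [eval_add, Finset.sum_add_distrib, mul_add]
    rw [integral_add (hpi a) (hpi b), mul_add]
    exact ha.add hb
  | smul c a _ ha =>
    simp only [eval_smul, smul_eq_mul, ← Finset.mul_sum]
    rw [integral_const_mul, mul_left_comm]
    exact (ha.const_mul c).congr fun n ↦ by ring

lemma tendsto_average_continuous_cos {θ : ℝ}
    (hθ : ∀ k : ℤ, k ≠ 0 → Complex.exp ((k * θ : ℝ) * Complex.I) ≠ 1) {g : ℝ → ℝ}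
    (hg : Continuous g) :
    Tendsto (fun n : ℕ ↦ (1 / (n : ℝ)) * ∑ r ∈ Finset.Icc 1 n, g (cos (r * θ))) atTop
      (nhds (π⁻¹ * ∫ u, g u ∂measureT)) := by
  rw [Metric.tendsto_atTop]
  intro ε hε
  obtain ⟨p, hp⟩ := exists_polynomial_near_of_continuousOn (-1) 1 g hg.continuousOn (ε / 3)
    (by positivity)
  obtain ⟨N, hN⟩ := Metric.tendsto_atTop.1 (tendsto_average_eval_cos hθ p) (ε / 3) (by positivity)
  have hpc : ∀ φ : ℝ, |p.eval (cos φ) - g (cos φ)| < ε / 3 :=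
    fun φ ↦ hp _ ⟨neg_one_le_cos φ, cos_le_one φ⟩
  have hI : |π⁻¹ * (∫ u, p.eval u ∂measureT) - π⁻¹ * ∫ u, g u ∂measureT| ≤ ε / 3 := by
    rw [integral_measureT_eq_integral_cos, integral_measureT_eq_integral_cos, ← mul_sub,
      ← intervalIntegral.integral_sub (Continuous.intervalIntegrable (by fun_prop) _ _)
        (Continuous.intervalIntegrable (by fun_prop) _ _), abs_mul, abs_of_pos (by positivity)]
    have := intervalIntegral.norm_integral_le_of_norm_le_const (a := 0) (b := π)
      (f := fun φ ↦ p.eval (cos φ) - g (cos φ)) (C := ε / 3) fun φ _ ↦ (hpc φ).le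
    rw [sub_zero, abs_of_pos pi_pos, Real.norm_eq_abs] at this
    rw [inv_mul_le_iff₀ pi_pos, mul_comm]
    exact this
  refine ⟨N, fun n hn ↦ ?_⟩
  have hA : |(1 / (n : ℝ)) * ∑ r ∈ Finset.Icc 1 n, p.eval (cos (r * θ)) -
      (1 / (n : ℝ)) * ∑ r ∈ Finset.Icc 1 n, g (cos (r * θ))| ≤ ε / 3 := by
    rw [← mul_sub, ← Finset.sum_sub_distrib, abs_mul, abs_of_nonneg (by positivity)]
    have h1 : |∑ r ∈ Finset.Icc 1 n, (p.eval (cos (r * θ)) - g (cos (r * θ)))| ≤ n * (ε / 3) :=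
      (Finset.abs_sum_le_sum_abs _ _).trans <|
        (Finset.sum_le_card_nsmul _ _ _ fun r _ ↦ (hpc _).le).trans (by simp)
    rcases eq_or_ne n 0 with rfl | hn0
    · simp; positivity
    · have : (0 : ℝ) < n := by positivity
      rw [one_div, inv_mul_le_iff₀ this]
      exact h1
  have hp' := hN n hn
  rw [Real.dist_eq] at hp' ⊢
  rw [abs_lt] at hp' ⊢
  rw [abs_le] at hA hI
  constructor <;> linarith [hA.1, hA.2, hI.1, hI.2, hp'.1, hp'.2]

lemma integral_chebyshev_two_mul (f : ℝ → ℝ) :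
    π⁻¹ * ∫ u, f (2 * u) ∂measureT =
      ∫ z in (-2 : ℝ)..2, f z / (π * √(4 - z ^ 2)) := by
  have h := intervalIntegral.smul_integral_comp_mul_left (a := -1) (b := 1)
    (fun z ↦ f z / (π * √(4 - z ^ 2))) (2 : ℝ)
  rw [mul_neg, mul_one] at h
  rw [← h, integral_measureT, ← intervalIntegral.integral_const_mul, smul_eq_mul,
    ← intervalIntegral.integral_const_mul]
  refine intervalIntegral.integral_congr fun u _ ↦ ?_
  have h4 : √(4 - (2 * u) ^ 2) = 2 * √(1 - u ^ 2) := by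
    rw [show 4 - (2 * u) ^ 2 = 2 ^ 2 * (1 - u ^ 2) by ring, sqrt_mul (by norm_num),
      sqrt_sq (by norm_num)]
  simp only [h4, sqrt_inv]
  rw [div_eq_mul_inv, mul_inv, mul_inv]
  ring

end

section

lemma exists_int_pow_add_pow {t q p : ℤ} (hpq : p ∣ q) {α β : ℂ} (hsum : α + β = t)
    (hprod : α * β = q) (n : ℕ) :
    ∃ a : ℤ, α ^ (n + 1) + β ^ (n + 1) = a ∧ p ∣ a - t ^ (n + 1) := by
  induction n using Nat.twoStepInduction with
  | zero => exact ⟨t, by simpa using hsum, by simp⟩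
  | one =>
    refine ⟨t ^ 2 - 2 * q, ?_, ?_⟩
    · push_cast; rw [← hsum, ← hprod]; ring
    · rw [show t ^ 2 - 2 * q - t ^ (1 + 1) = q * (-2) by ring]
      exact Dvd.dvd.mul_right hpq _
  | more n ih₁ ih₂ =>
    obtain ⟨a, ha, -⟩ := ih₁
    obtain ⟨b, hb, hb'⟩ := ih₂
    refine ⟨t * b - q * a, ?_, ?_⟩
    · push_cast; rw [← hsum, ← hprod, ← ha, ← hb]; ring
    · rw [show t * b - q * a - t ^ (n + 2 + 1) = t * (b - t ^ (n + 1 + 1)) - q * a by ring]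
      exact dvd_sub (Dvd.dvd.mul_left hb' _) (Dvd.dvd.mul_right hpq _)

lemma pow_ne_pow_of_not_dvd {t q p : ℤ} (hp : Prime p) (hpq : p ∣ q) (hpt : ¬ p ∣ t) {α β : ℂ}
    (hsum : α + β = t) (hprod : α * β = q) {n : ℕ} (hn : n ≠ 0) : α ^ n ≠ β ^ n := by
  obtain ⟨m, rfl⟩ := Nat.exists_eq_succ_of_ne_zero hn
  intro (h : α ^ (m + 1) = β ^ (m + 1))
  obtain ⟨a, ha, ha'⟩ := exists_int_pow_add_pow hpq hsum hprod m
  have hsq : a ^ 2 = 4 * q ^ (m + 1) := by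
    have : ((a ^ 2 : ℤ) : ℂ) = ((4 * q ^ (m + 1) : ℤ) : ℂ) := by
      push_cast
      rw [← ha, ← hprod, mul_pow, ← h]
      ring
    exact_mod_cast this
  have hpa : p ∣ a := hp.dvd_of_dvd_pow (n := 2) <| by
    rw [hsq]
    exact Dvd.dvd.mul_left (hpq.trans (dvd_pow_self _ m.succ_ne_zero)) _
  exact hpt (hp.dvd_of_dvd_pow ((dvd_sub_right hpa).1 ha'))

lemma eq_conj_of_sq_lt {t q : ℝ} (h : t ^ 2 < 4 * q) {α β : ℂ} (hsum : α + β = t)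
    (hprod : α * β = q) : β = (starRingEnd ℂ) α := by
  have h1 := congrArg Complex.re hsum
  have h2 := congrArg Complex.im hsum
  have h3 := congrArg Complex.re hprod
  have h4 := congrArg Complex.im hprod
  simp at h1 h2 h3 h4
  have him : β.im = -α.im := by linarith
  rw [him] at h3 h4
  have h5 : α.im * (β.re - α.re) = 0 := by linarith
  rcases mul_eq_zero.1 h5 with h0 | h0
  · rw [h0, zero_mul, sub_zero] at h3
    rw [← h1, ← h3] at h
    nlinarith [sq_nonneg (α.re - β.re)]
  · apply Complex.ext <;> simp <;> linarith

end

/-- Let `E/F_q` be an ordinary elliptic curve with trace of Frobenius `t`, let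
`α, β ∈ ℂ` be the roots of `T² - tT + q`, so that `t_{q^r} = α^r + β^r`, and set
`x_r = t_{q^r}/q^{r/2}`. Then `(x_r)_{r ≥ 1}` is equidistributed in `[-2, 2]` with
respect to the measure `(1/π) dz/√(4 - z²)`. -/
theorem ordinary_frobenius_traces_equidistributed
    {F : Type*} [Field F] [Fintype F] (W : WeierstrassCurve F) [W.IsElliptic]
    (q : ℕ) (hq : q = Fintype.card F)
    (t : ℤ) (ht : t = (q : ℤ) + 1 - Nat.card W.toAffine.Point)
    (hord : ¬ (ringChar F : ℤ) ∣ t)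
    (α β : ℂ) (hsum : α + β = (t : ℂ)) (hprod : α * β = (q : ℂ))
    (x : ℕ → ℝ) (hx : ∀ r, x r = (α ^ r + β ^ r).re / Real.sqrt q ^ r)
    (f : ℝ → ℝ) (hf : Continuous f) :
    Tendsto (fun n : ℕ => (1 / (n : ℝ)) * ∑ r ∈ Finset.Icc 1 n, f (x r)) atTop
      (nhds (∫ z in (-2:ℝ)..2, f z / (π * Real.sqrt (4 - z ^ 2)))) := by
  have hlt : t ^ 2 < 4 * (q : ℤ) := hq ▸ sq_trace_lt W (hq ▸ ht) hord
  have hp := Nat.prime_iff_prime_int.1 (CharP.char_is_prime F (ringChar F))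
  have hpq : (ringChar F : ℤ) ∣ (q : ℤ) := by
    obtain ⟨k, -, hk⟩ := FiniteField.card F (ringChar F)
    rw [hq, hk]
    exact_mod_cast dvd_pow_self _ k.ne_zero
  have hβ : β = (starRingEnd ℂ) α :=
    eq_conj_of_sq_lt (t := t) (q := q) (by exact_mod_cast hlt) (by simpa using hsum)
      (by simpa using hprod)
  have hnorm : ‖α‖ = √q := by
    rw [hβ, Complex.mul_conj, Complex.normSq_eq_norm_sq] at hprod
    rw [← sqrt_sq (norm_nonneg α)]
    congr 1
    exact_mod_cast hprod
  have hq0 : 0 < √(q : ℝ) := by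
    rw [hq]
    exact sqrt_pos.2 (by exact_mod_cast Fintype.card_pos)
  have hα : α = √(q : ℝ) * Complex.exp (α.arg * Complex.I) := by
    rw [← hnorm, Complex.norm_mul_exp_arg_mul_I]
  have hpow : ∀ n : ℕ, α ^ n = ((√(q : ℝ) ^ n : ℝ) : ℂ) *
      Complex.exp ((n * α.arg : ℝ) * Complex.I) := fun n ↦ by
    conv_lhs => rw [hα]
    rw [mul_pow, ← Complex.exp_nat_mul]
    push_cast
    ring_nf
  have hθ : ∀ k : ℤ, k ≠ 0 → Complex.exp ((k * α.arg : ℝ) * Complex.I) ≠ 1 := by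
    intro k hk h
    obtain ⟨m, hm⟩ := k.eq_nat_or_neg
    have habs : Complex.exp ((m * α.arg : ℝ) * Complex.I) = 1 := by
      rcases hm with rfl | rfl
      · simpa using h
      · rw [← inv_inj, ← Complex.exp_neg, inv_one, ← h]
        push_cast
        ring_nf
    refine pow_ne_pow_of_not_dvd hp hpq hord hsum (by exact_mod_cast hprod)
      (n := m) (by omega) ?_
    rw [hβ, ← map_pow, hpow, habs, mul_one, Complex.conj_ofReal]
  have hxr : ∀ r, x r = 2 * cos (r * α.arg) := by
    intro r
    rw [hx, hβ, ← map_pow, Complex.add_conj, Complex.ofReal_re, hpow, Complex.re_ofReal_mul,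
      Complex.exp_ofReal_mul_I_re]
    field_simp
  simp only [hxr]
  rw [← integral_chebyshev_two_mul]
  exact tendsto_average_continuous_cos hθ (g := fun u ↦ f (2 * u)) (by fun_prop)
end
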